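/- Let d ≥ 2, let Σ ⊂ GL_d(ℝ) be a compact subset, and let μ₀ be a Borel probability measure supported in Σ which is quasi-irreducible and satisfies L_1(μ₀) > L_2(μ₀). Then there exist α ∈ (0,1], θ > 1 and C > 0 such that for every μ₀-stationary Borel probability measure η on ℙ(ℝ^d), every α-Hölder φ : ℙ(ℝ^d) → ℝ, every n ≥ 1 and every v̂ ∈ ℙ(ℝ^d), |Q_{μ₀}^n φ(v̂) − ∫ φ dη| ≤ C θ^{−n} v_α(φ). -/

import Mathlib

open MeasureTheory Filter
open scoped LinearAlgebra.Projectivization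

noncomputable section

abbrev GLd (d : ℕ) := GL (Fin d) ℝ
abbrev Ed (d : ℕ) := EuclideanSpace ℝ (Fin d)
abbrev Pd (d : ℕ) := ℙ ℝ (Ed d)

variable {d : ℕ}

instance : MeasurableSpace (GLd d) := borel _
instance : BorelSpace (GLd d) := ⟨rfl⟩

instance : TopologicalSpace (Pd d) :=
  (instTopologicalSpaceQuotient : TopologicalSpace (Quotient (projectivizationSetoid ℝ (Ed d))))
instance : MeasurableSpace (Pd d) := borel _
instance : BorelSpace (Pd d) := ⟨rfl⟩

/-- The continuous linear map on Euclidean space induced by `g ∈ GL_d(ℝ)`. -/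
def glCLM (g : GLd d) : Ed d →L[ℝ] Ed d :=
  Matrix.toEuclideanCLM (𝕜 := ℝ) (g : Matrix (Fin d) (Fin d) ℝ)

/-- The operator norm of `g ∈ GL_d(ℝ)`. -/
def gnorm (g : GLd d) : ℝ := ‖glCLM g‖

lemma glCLM_leftInv (g : GLd d) (v : Ed d) : glCLM g⁻¹ (glCLM g v) = v := by
  have h : glCLM (d := d) g⁻¹ * glCLM g = 1 := by
    rw [glCLM, glCLM, ← map_mul]
    norm_cast
    rw [inv_mul_cancel g]
    exact map_one _
  calc glCLM g⁻¹ (glCLM g v) = (glCLM g⁻¹ * glCLM g) v := rfl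
    _ = v := by rw [h]; rfl

lemma glLinear_injective (g : GLd d) : Function.Injective (glCLM g).toLinearMap :=
  Function.LeftInverse.injective (g := (glCLM g⁻¹)) (fun v => glCLM_leftInv g v)

/-- The projective action of `g ∈ GL_d(ℝ)` on `ℙ(ℝ^d)`. -/
def pact (g : GLd d) : Pd d → Pd d :=
  Projectivization.map (glCLM g).toLinearMap (glLinear_injective g)

/-- The projective distance `δ` on `ℙ(ℝ^d)`, computed on representatives. -/
def pdelta (x y : Pd d) : ℝ :=
  Real.sqrt (‖x.rep‖ ^ 2 * ‖y.rep‖ ^ 2 - (inner ℝ x.rep y.rep : ℝ) ^ 2) /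
    (‖x.rep‖ * ‖y.rep‖)

/-- Convolution of two measures on `GL_d(ℝ)`. -/
def mconv (μ ν : Measure (GLd d)) : Measure (GLd d) :=
  (μ.prod ν).map (fun p => p.1 * p.2)

/-- `n`-fold convolution power of a measure on `GL_d(ℝ)`. -/
def mconvN (μ : Measure (GLd d)) : ℕ → Measure (GLd d)
  | 0 => Measure.dirac 1
  | n + 1 => if n = 0 then μ else mconv (mconvN μ n) μ

/-- The top Lyapunov exponent of a (compactly supported) measure on `GL_d(ℝ)`. -/
def L1 (μ : Measure (GLd d)) : ℝ :=
  limUnder atTop (fun n : ℕ => (n : ℝ)⁻¹ * ∫ g, Real.log (gnorm g) ∂(mconvN μ n))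

/-- `N₂ g = s₁(g)s₂(g)`, the product of the two largest singular values. -/
def N2 (g : GLd d) : ℝ :=
  sSup { x | ∃ p q : Ed d, ‖p‖ = 1 ∧ ‖q‖ = 1 ∧ (inner ℝ p q : ℝ) = 0 ∧
    x = Real.sqrt (‖glCLM g p‖ ^ 2 * ‖glCLM g q‖ ^ 2 -
      (inner ℝ (glCLM g p) (glCLM g q) : ℝ) ^ 2) }

/-- `L₁(μ) + L₂(μ)`. -/
def L12 (μ : Measure (GLd d)) : ℝ :=
  limUnder atTop (fun n : ℕ => (n : ℝ)⁻¹ * ∫ g, Real.log (N2 g) ∂(mconvN μ n))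

/-- The second Lyapunov exponent. -/
def L2 (μ : Measure (GLd d)) : ℝ := L12 μ - L1 μ

/-- The top Lyapunov exponent of the restriction of `μ` to an (invariant) subspace `V`. -/
def L1rest (μ : Measure (GLd d)) (V : Submodule ℝ (Ed d)) : ℝ :=
  limUnder atTop (fun n : ℕ => (n : ℝ)⁻¹ *
    ∫ g, Real.log ‖LinearMap.toContinuousLinearMap ((glCLM g).toLinearMap.domRestrict V)‖
      ∂(mconvN μ n))

/-- Quasi-irreducibility of a measure on `GL_d(ℝ)`. -/
def QuasiIrreducible (μ : Measure (GLd d)) : Prop :=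
  ¬ ∃ V : Submodule ℝ (Ed d), V ≠ ⊥ ∧ V ≠ ⊤ ∧
    (∀ᵐ g ∂μ, V.map (glCLM g).toLinearMap = V) ∧ L1rest μ V < L1 μ

/-- Irreducibility of a measure on `GL_d(ℝ)`. -/
def Irred (μ : Measure (GLd d)) : Prop :=
  ¬ ∃ V : Submodule ℝ (Ed d), V ≠ ⊥ ∧ V ≠ ⊤ ∧
    (∀ᵐ g ∂μ, V.map (glCLM g).toLinearMap = V)

/-- The Markov operator associated with a measure on `GL_d(ℝ)`. -/
def Qop (μ : Measure (GLd d)) (φ : Pd d → ℝ) : Pd d → ℝ :=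
  fun v => ∫ g, φ (pact g v) ∂μ

/-- The average `α`-Hölder constant of a measure on `GL_d(ℝ)`. -/
def kalpha (α : ℝ) (μ : Measure (GLd d)) : ℝ :=
  sSup { x | ∃ v₁ v₂ : Pd d, v₁ ≠ v₂ ∧
    x = ∫ g, (pdelta (pact g v₁) (pact g v₂) / pdelta v₁ v₂) ^ α ∂μ }

/-- The `α`-Hölder seminorm of an observable on `ℙ(ℝ^d)`. -/
def valpha (α : ℝ) (φ : Pd d → ℝ) : ℝ :=
  sSup { x | ∃ v₁ v₂ : Pd d, v₁ ≠ v₂ ∧ x = |φ v₁ - φ v₂| / pdelta v₁ v₂ ^ α }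

/-- `φ` is `α`-Hölder: `v_α(φ) < ∞`. -/
def IsHolder (α : ℝ) (φ : Pd d → ℝ) : Prop :=
  BddAbove { x | ∃ v₁ v₂ : Pd d, v₁ ≠ v₂ ∧ x = |φ v₁ - φ v₂| / pdelta v₁ v₂ ^ α }

/-- The total variation distance between two finite measures. -/
def tvDist (μ ν : Measure (GLd d)) [IsFiniteMeasure μ] [IsFiniteMeasure ν] : ℝ :=
  ((μ.toSignedMeasure - ν.toSignedMeasure).totalVariation Set.univ).toReal

/-- A measure is compactly supported. -/
def CompactlySupported (μ : Measure (GLd d)) : Prop :=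
  ∃ K : Set (GLd d), IsCompact K ∧ μ Kᶜ = 0

/-- `S` is the (topological) support of `μ`. -/
def IsSupport (μ : Measure (GLd d)) (S : Set (GLd d)) : Prop :=
  μ Sᶜ = 0 ∧ ∀ x ∈ S, ∀ U : Set (GLd d), IsOpen U → x ∈ U → 0 < μ U

/-- A measure `η` on `ℙ(ℝ^d)` is `μ`-stationary. -/
def Stationary (μ : Measure (GLd d)) (η : Measure (Pd d)) : Prop :=
  ∀ φ : Pd d → ℝ, Continuous φ → (∃ C, ∀ v, |φ v| ≤ C) →
    ∫ v, φ v ∂η = ∫ g, ∫ v, φ (pact g v) ∂η ∂μ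

/-!
Call `β` the least growth rate of `𝔼 log ‖g u‖ / n` over unit vectors `u`, where `g` has law
`μ₀^{*n}`. A record-time argument and compactness of the sphere give a vector `u` whose mean growth
never exceeds `n β`. Since lower deviations below `n β` are exponentially small uniformly in the
vector, the mean excess of this `u` over the rate `β` is `o(n)`. Vectors whose excess per step is
summable along a sparse sequence of times form an almost surely invariant subspace on which the top
exponent is at most `β`, so quasi-irreducibility forces `L₁ ≤ β`: every vector grows in mean at the
top rate, uniformly.

Areas of parallelograms grow in mean at rate at most `L₁ + L₂ < 2 L₁ ≤ 2 β`, so `log δ(ĝx, ĝy)`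
drifts to `-∞` at a linear rate uniformly in `x ≠ y`. For small `α` the drift passes to the
exponential moment of this cocycle, and the cocycle property makes those moments submultiplicative
in `n`. Hence `δ^α` is contracted exponentially in mean, `Q^n φ` becomes constant at that rate, and
stationarity identifies the constant as `∫ φ dη`.
-/

open Topology
open scoped Pointwise

section Convolution

instance instSecondCountableTopologyGLd : SecondCountableTopology (GLd d) :=
  have : SecondCountableTopology (Matrix (Fin d) (Fin d) ℝ) :=
    inferInstanceAs (SecondCountableTopology (Fin d → Fin d → ℝ))
  have : SecondCountableTopology (Matrix (Fin d) (Fin d) ℝ)ᵐᵒᵖ :=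
    MulOpposite.opHomeomorph.symm.isEmbedding.secondCountableTopology
  (Units.isEmbedding_embedProduct (M := Matrix (Fin d) (Fin d) ℝ)).secondCountableTopology

lemma mconv_eq (μ ν : Measure (GLd d)) : mconv μ ν = Measure.mconv μ ν := rfl

variable {μ ν : Measure (GLd d)}

lemma mconvN_one : mconvN μ 1 = μ := by simp [mconvN]

lemma ae_mconv {p q r : GLd d → Prop} (hp : ∀ᵐ g ∂μ, p g) (hq : ∀ᵐ h ∂ν, q h)
    (hpq : ∀ g h, p g → q h → r (g * h)) (hr : MeasurableSet {g | r g}) :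
    ∀ᵐ g ∂mconv μ ν, r g := by
  rw [mconv, ae_map_iff (by fun_prop) hr]
  filter_upwards [Measure.quasiMeasurePreserving_fst.ae hp,
    Measure.quasiMeasurePreserving_snd.ae hq] with x hx hy using hpq _ _ hx hy

lemma CompactlySupported.conv (hμ : CompactlySupported μ) (hν : CompactlySupported ν) :
    CompactlySupported (mconv μ ν) := by
  obtain ⟨K, hK, hμK⟩ := hμ
  obtain ⟨L, hL, hνL⟩ := hν
  have hKL : IsCompact (K * L) := hK.mul hL
  exact ⟨K * L, hKL, ae_mconv hμK hνL (fun g h => Set.mul_mem_mul) hKL.isClosed.measurableSet⟩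

variable [IsProbabilityMeasure μ] [IsProbabilityMeasure ν]

instance instIsProbabilityMeasureMconv : IsProbabilityMeasure (mconv μ ν) :=
  Measure.isProbabilityMeasure_map (by fun_prop)

instance instIsProbabilityMeasureMconvN (n : ℕ) : IsProbabilityMeasure (mconvN μ n) := by
  induction n with
  | zero => rw [mconvN]; infer_instance
  | succ n ih => rw [mconvN]; split_ifs <;> infer_instance

lemma mconvN_succ (μ : Measure (GLd d)) [IsProbabilityMeasure μ] (n : ℕ) :
    mconvN μ (n + 1) = mconv (mconvN μ n) μ := by
  rcases eq_or_ne n 0 with rfl | hn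
  · rw [zero_add, mconvN_one, mconvN, mconv_eq, Measure.dirac_one_mconv]
  · rw [mconvN, if_neg hn]

lemma mconvN_add (μ : Measure (GLd d)) [IsProbabilityMeasure μ] (m n : ℕ) :
    mconvN μ (m + n) = mconv (mconvN μ m) (mconvN μ n) := by
  induction n with
  | zero => rw [add_zero, mconvN, mconv_eq, Measure.mconv_dirac_one]
  | succ n ih =>
    rw [← add_assoc, mconvN_succ, ih, mconvN_succ]
    simp only [mconv_eq]
    exact Measure.mconv_assoc _ _ _

lemma ae_mconvN {p : ℕ → GLd d → Prop} (hp : ∀ n, MeasurableSet {g | p n g}) (h0 : p 0 1)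
    (h1 : ∀ᵐ h ∂μ, ∀ n g, p n g → p (n + 1) (g * h)) (n : ℕ) : ∀ᵐ g ∂mconvN μ n, p n g := by
  induction n with
  | zero => rwa [mconvN, ae_dirac_iff (hp 0)]
  | succ n ih =>
    rw [mconvN_succ]
    exact ae_mconv ih h1 (fun g h hg hh => hh n g hg) (hp _)

namespace CompactlySupported

lemma convPow (hμ : CompactlySupported μ) (n : ℕ) : CompactlySupported (mconvN μ n) := by
  induction n with
  | zero => exact ⟨{1}, isCompact_singleton, by simp [mconvN]⟩
  | succ n ih => rw [mconvN_succ]; exact ih.conv hμ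

lemma integrable (hμ : CompactlySupported μ) {F : GLd d → ℝ} (hF : Continuous F) :
    Integrable F μ := by
  obtain ⟨K, hK, hμK⟩ := hμ
  have h : IntegrableOn F K μ := hF.continuousOn.integrableOn_compact hK
  rwa [IntegrableOn, Measure.restrict_eq_self_of_ae_mem hμK] at h

lemma integrable_prod (hμ : CompactlySupported μ) (hν : CompactlySupported ν) {F : GLd d → ℝ}
    (hF : Continuous F) : Integrable (fun p : GLd d × GLd d => F (p.1 * p.2)) (μ.prod ν) :=
  (integrable_map_measure hF.aestronglyMeasurable (by fun_prop)).1
    ((hμ.conv hν).integrable hF)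

lemma integral_mconv (hμ : CompactlySupported μ) (hν : CompactlySupported ν) {F : GLd d → ℝ}
    (hF : Continuous F) : ∫ g, F g ∂mconv μ ν = ∫ h, ∫ g, F (g * h) ∂μ ∂ν := by
  rw [mconv, integral_map (by fun_prop) hF.aestronglyMeasurable]
  exact integral_prod_symm _ (hμ.integrable_prod hν hF)

lemma integrable_integral (hμ : CompactlySupported μ) (hν : CompactlySupported ν)
    {F : GLd d → ℝ} (hF : Continuous F) : Integrable (fun h => ∫ g, F (g * h) ∂μ) ν :=
  (hμ.integrable_prod hν hF).integral_prod_right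

end CompactlySupported

end Convolution

section Cocycle

lemma integral_exp_mul_le {Ω : Type*} [MeasurableSpace Ω] {P : Measure Ω}
    [IsProbabilityMeasure P] {X : Ω → ℝ} (hX : AEStronglyMeasurable X P) {R c t : ℝ}
    (hR : ∀ᵐ ω ∂P, |X ω| ≤ R) (hc : ∫ ω, X ω ∂P ≤ c) (ht : 0 ≤ t) (htR : t * R ≤ 1) :
    ∫ ω, Real.exp (t * X ω) ∂P ≤ 1 + t * c + (t * R) ^ 2 := by
  have hint : Integrable X P := .of_bound hX R hR
  have hpt : ∀ᵐ ω ∂P, Real.exp (t * X ω) ≤ 1 + (t * R) ^ 2 + t * X ω := by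
    filter_upwards [hR] with ω hω
    have habs : |t * X ω| ≤ t * R := by rw [abs_mul, abs_of_nonneg ht]; gcongr
    have hexp := (abs_le.1 (Real.abs_exp_sub_one_sub_id_le (habs.trans htR))).2
    have hsq : (t * X ω) ^ 2 ≤ (t * R) ^ 2 := sq_le_sq.2 (habs.trans (le_abs_self _))
    linarith
  calc ∫ ω, Real.exp (t * X ω) ∂P ≤ ∫ ω, (1 + (t * R) ^ 2 + t * X ω) ∂P :=
        integral_mono_of_nonneg (.of_forall fun ω => (Real.exp_pos _).le)
          ((integrable_const _).add (hint.const_mul t)) hpt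
    _ = 1 + (t * R) ^ 2 + t * ∫ ω, X ω ∂P := by
        rw [integral_add (integrable_const _) (hint.const_mul t), integral_const_mul]
        simp
    _ ≤ 1 + t * c + (t * R) ^ 2 := by linarith [mul_le_mul_of_nonneg_left hc ht]

/-- An additive cocycle `σ y g` over an action of `GL_d(ℝ)` on `Y`, bounded uniformly in `y`.
The translate of `y` by `h` enters only through its existence (the point `z` below), so that no
action on `Y` has to be constructed. -/
structure IsCocycle {Y : Type*} (σ : Y → GLd d → ℝ) : Prop where
  continuous (y : Y) : Continuous (σ y)
  one (y : Y) : σ y 1 = 0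
  exists_mul (y : Y) (h : GLd d) : ∃ z, ∀ g, σ y (g * h) = σ z g + σ y h
  exists_abs_le : ∃ κ : GLd d → ℝ, Continuous κ ∧ ∀ y g, |σ y g| ≤ κ g

namespace IsCocycle

variable {Y : Type*} {σ : Y → GLd d → ℝ} {μ ν : Measure (GLd d)}
  [IsProbabilityMeasure μ] [IsProbabilityMeasure ν]

lemma neg (hσ : IsCocycle σ) : IsCocycle fun y g => -σ y g where
  continuous y := (hσ.continuous y).neg
  one y := by rw [hσ.one, neg_zero]
  exists_mul y h := by
    obtain ⟨z, hz⟩ := hσ.exists_mul y h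
    exact ⟨z, fun g => by rw [hz, neg_add]⟩
  exists_abs_le := by simpa only [abs_neg] using hσ.exists_abs_le

lemma exists_ae_abs_le (hσ : IsCocycle σ) (hμ : CompactlySupported μ) :
    ∃ R, 0 ≤ R ∧ ∀ n : ℕ, ∀ᵐ g ∂mconvN μ n, ∀ y, |σ y g| ≤ n * R := by
  obtain ⟨κ, hκ, hσκ⟩ := hσ.exists_abs_le
  obtain ⟨K, hK, hμK⟩ := hμ
  obtain ⟨R, hR⟩ := hK.exists_bound_of_continuousOn hκ.continuousOn
  refine ⟨max R 0, le_max_right _ _, ae_mconvN (fun n => ?_) (fun y => ?_) ?_⟩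
  · simp only [Set.ofPred_forall]
    exact (isClosed_iInter fun y =>
      isClosed_le (hσ.continuous y).abs continuous_const).measurableSet
  · rw [hσ.one, abs_zero, Nat.cast_zero, zero_mul]
  · have hμK' : ∀ᵐ h ∂μ, h ∈ K := hμK
    filter_upwards [hμK'] with h hh n g hg y
    obtain ⟨z, hz⟩ := hσ.exists_mul y h
    calc |σ y (g * h)| ≤ |σ z g| + |σ y h| := by rw [hz]; exact abs_add_le _ _
      _ ≤ n * max R 0 + max R 0 := by
        gcongr
        · exact hg z
        · exact (hσκ y h).trans ((le_abs_self _).trans ((hR h hh).trans (le_max_left _ _)))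
      _ = (n + 1 : ℕ) * max R 0 := by push_cast; ring

lemma exists_abs_integral_le (hσ : IsCocycle σ) (hμ : CompactlySupported μ) :
    ∃ R, ∀ (n : ℕ) y, |∫ g, σ y g ∂mconvN μ n| ≤ n * R := by
  obtain ⟨R, -, hR⟩ := hσ.exists_ae_abs_le hμ
  refine ⟨R, fun n y => ?_⟩
  have hbound : ∀ᵐ g ∂mconvN μ n, ‖σ y g‖ ≤ n * R := (hR n).mono fun g hg => hg y
  simpa using norm_integral_le_of_norm_le_const hbound

lemma add_integral_le_integral_mconv (hσ : IsCocycle σ) (hμ : CompactlySupported μ)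
    (hν : CompactlySupported ν) {c : ℝ} (hc : ∀ y, c ≤ ∫ g, σ y g ∂μ) (y : Y) :
    c + ∫ g, σ y g ∂ν ≤ ∫ g, σ y g ∂mconv μ ν := by
  have hint := hν.integrable (hσ.continuous y)
  calc c + ∫ h, σ y h ∂ν = ∫ h, (c + σ y h) ∂ν := by
        rw [integral_add (integrable_const _) hint]; simp
    _ ≤ ∫ h, ∫ g, σ y (g * h) ∂μ ∂ν := by
        refine integral_mono ((integrable_const _).add hint)
          (hμ.integrable_integral hν (hσ.continuous y)) fun h => ?_
        obtain ⟨z, hz⟩ := hσ.exists_mul y h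
        simp only [hz]
        rw [integral_add (hμ.integrable (hσ.continuous z)) (integrable_const _)]
        simpa using hc z
    _ = ∫ g, σ y g ∂mconv μ ν := (hμ.integral_mconv hν (hσ.continuous y)).symm

lemma continuous_exp (hσ : IsCocycle σ) (t : ℝ) (y : Y) :
    Continuous fun g => Real.exp (t * σ y g) :=
  Real.continuous_exp.comp ((hσ.continuous y).const_mul t)

lemma integral_exp_mconv_le (hσ : IsCocycle σ) (hμ : CompactlySupported μ)
    (hν : CompactlySupported ν) {t A B : ℝ} (hA0 : 0 ≤ A)
    (hA : ∀ y, ∫ g, Real.exp (t * σ y g) ∂μ ≤ A) (hB : ∀ y, ∫ g, Real.exp (t * σ y g) ∂ν ≤ B)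
    (y : Y) : ∫ g, Real.exp (t * σ y g) ∂mconv μ ν ≤ A * B := by
  calc ∫ g, Real.exp (t * σ y g) ∂mconv μ ν
      = ∫ h, ∫ g, Real.exp (t * σ y (g * h)) ∂μ ∂ν :=
        hμ.integral_mconv hν (hσ.continuous_exp t y)
    _ ≤ ∫ h, A * Real.exp (t * σ y h) ∂ν := by
        refine integral_mono (hμ.integrable_integral hν (hσ.continuous_exp t y))
          ((hν.integrable (hσ.continuous_exp t y)).const_mul A) fun h => ?_
        obtain ⟨z, hz⟩ := hσ.exists_mul y h
        simp only [hz, mul_add, Real.exp_add]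
        rw [integral_mul_const]
        exact mul_le_mul_of_nonneg_right (hA z) (Real.exp_pos _).le
    _ = A * ∫ h, Real.exp (t * σ y h) ∂ν := integral_const_mul _ _
    _ ≤ A * B := mul_le_mul_of_nonneg_left (hB y) hA0

lemma integral_exp_mconvN_mul_le (hσ : IsCocycle σ) (hμ : CompactlySupported μ) {t A : ℝ} {N : ℕ}
    (hA0 : 0 ≤ A) (hA : ∀ y, ∫ g, Real.exp (t * σ y g) ∂mconvN μ N ≤ A) (q : ℕ) (y : Y) :
    ∫ g, Real.exp (t * σ y g) ∂mconvN μ (q * N) ≤ A ^ q := by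
  induction q generalizing y with
  | zero => rw [zero_mul, mconvN, integral_dirac]; simp [hσ.one]
  | succ q ih =>
    rw [add_one_mul, mconvN_add, pow_succ]
    exact hσ.integral_exp_mconv_le (hμ.convPow _) (hμ.convPow _) (pow_nonneg hA0 q) ih hA y

lemma exists_integral_exp_mconvN_le_exp (hσ : IsCocycle σ) (hμ : CompactlySupported μ) {N : ℕ}
    {b c : ℝ} (hc : ∀ y, ∫ g, σ y g ∂mconvN μ N ≤ c) (hcb : c < N * b) :
    ∃ α, 0 < α ∧ α ≤ 1 ∧ ∀ y, ∫ g, Real.exp (α * σ y g) ∂mconvN μ N ≤ Real.exp (α * b * N) := by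
  obtain ⟨R, hR0, hR⟩ := hσ.exists_ae_abs_le hμ
  have hR1 : 0 < N * R + 1 := by positivity
  have hR2 : 0 < (N * R) ^ 2 + 1 := by positivity
  obtain ⟨α, hα0, hα⟩ := exists_between (show (0 : ℝ) <
    min 1 (min (1 / (N * R + 1)) ((N * b - c) / ((N * R) ^ 2 + 1))) from
    lt_min one_pos (lt_min (by positivity) (div_pos (sub_pos.2 hcb) hR2)))
  obtain ⟨hα1, hα2, hα3⟩ : α < 1 ∧ α < 1 / (N * R + 1) ∧ α < (N * b - c) / ((N * R) ^ 2 + 1) := by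
    simpa only [lt_min_iff] using hα
  rw [lt_div_iff₀ hR1] at hα2
  rw [lt_div_iff₀ hR2] at hα3
  refine ⟨α, hα0, hα1.le, fun y => ?_⟩
  calc ∫ g, Real.exp (α * σ y g) ∂mconvN μ N
      ≤ 1 + α * c + (α * (N * R)) ^ 2 :=
        integral_exp_mul_le (hσ.continuous y).aestronglyMeasurable
          ((hR N).mono fun g hg => hg y) (hc y) hα0.le (by linarith)
    _ = α * (c + α * (N * R) ^ 2) + 1 := by ring
    _ ≤ α * (b * N) + 1 := by gcongr; linarith
    _ ≤ Real.exp (α * b * N) := by rw [mul_assoc]; exact Real.add_one_le_exp _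

/-- Splitting `n` into blocks of length `N` turns one bound on the mean over a block into an
exponential bound for all times. -/
theorem exists_integral_exp_le (hσ : IsCocycle σ) (hμ : CompactlySupported μ) {N : ℕ} {b c : ℝ}
    (hN : 0 < N) (hc : ∀ y, ∫ g, σ y g ∂mconvN μ N ≤ c) (hcb : c < N * b) :
    ∃ α C, 0 < α ∧ α ≤ 1 ∧ 0 < C ∧
      ∀ (n : ℕ) y, ∫ g, Real.exp (α * σ y g) ∂mconvN μ n ≤ C * Real.exp (α * b * n) := by
  obtain ⟨R, hR0, hR⟩ := hσ.exists_ae_abs_le hμ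
  obtain ⟨α, hα0, hα1, hblock⟩ := hσ.exists_integral_exp_mconvN_le_exp hμ hc hcb
  refine ⟨α, Real.exp (α * (N * (R + |b|))), hα0, hα1, Real.exp_pos _, fun n y => ?_⟩
  set q := n / N
  set r := n % N
  have hn : r + q * N = n := Nat.mod_add_div' n N
  have hrN : (r : ℝ) ≤ N := by exact_mod_cast (Nat.mod_lt n hN).le
  have hrest : ∀ z, ∫ g, Real.exp (α * σ z g) ∂mconvN μ r ≤ Real.exp (α * (N * R)) := fun z => by
    have hbound : ∀ᵐ g ∂mconvN μ r, ‖Real.exp (α * σ z g)‖ ≤ Real.exp (α * (N * R)) := by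
      filter_upwards [hR r] with g hg
      rw [Real.norm_of_nonneg (Real.exp_pos _).le]
      gcongr
      exact (le_abs_self _).trans ((hg z).trans (by gcongr))
    simpa using (le_abs_self _).trans (norm_integral_le_of_norm_le_const hbound)
  have hrb : -(N * |b|) ≤ r * b := by
    have := mul_le_mul hrN le_rfl (abs_nonneg b) (Nat.cast_nonneg N)
    nlinarith [neg_abs_le b, (Nat.cast_nonneg r : (0 : ℝ) ≤ r)]
  calc ∫ g, Real.exp (α * σ y g) ∂mconvN μ n
      = ∫ g, Real.exp (α * σ y g) ∂mconv (mconvN μ r) (mconvN μ (q * N)) := by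
        rw [← mconvN_add, hn]
    _ ≤ Real.exp (α * (N * R)) * Real.exp (α * b * N) ^ q :=
        hσ.integral_exp_mconv_le (hμ.convPow _) (hμ.convPow _) (Real.exp_pos _).le hrest
          (hσ.integral_exp_mconvN_mul_le hμ (Real.exp_pos _).le hblock q) y
    _ = Real.exp (α * (N * R + b * (q * N))) := by
        rw [← Real.exp_nat_mul, ← Real.exp_add]; ring_nf
    _ ≤ Real.exp (α * (N * (R + |b|) + b * (r + q * N))) := by
        gcongr 1
        exact mul_le_mul_of_nonneg_left (by linarith) hα0.le
    _ = Real.exp (α * (N * (R + |b|))) * Real.exp (α * b * n) := by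
        rw [← Real.exp_add, ← hn]; push_cast; ring_nf

end IsCocycle

end Cocycle

section Calibration

/-- A low record `n` of `f n (x n) - n * b` works: the last `n - k` steps after the first `k` cannot
bring the sum back below the record. -/
lemma exists_forall_le_of_tendsto_div {X : Type*} {f : ℕ → X → ℝ} {x : ℕ → X}
    (hf : ∀ j k y, f j (x j) + f k y ≤ f (j + k) y) {β b : ℝ}
    (hx : Tendsto (fun n : ℕ => f n (x n) / n) atTop (𝓝 β)) (hb : β < b) (i : ℕ) :
    ∃ y, ∀ k ≤ i, f k y ≤ k * b := by
  have hbot : Tendsto (fun n : ℕ => f n (x n) - n * b) atTop atBot := by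
    refine (tendsto_natCast_atTop_atTop.atTop_mul_neg (sub_neg.2 hb)
      (hx.sub_const b)).congr' ?_
    filter_upwards [eventually_ne_atTop 0] with n hn
    field_simp
  obtain ⟨n, hin, hrec⟩ := low_scores hbot (i + 1)
  refine ⟨x n, fun k hk => ?_⟩
  rcases eq_or_ne k 0 with rfl | hk0
  · have := hf n 0 (x n)
    rw [add_zero] at this
    simpa using this
  · have hsplit := hf (n - k) k (x n)
    have hlow := hrec (n - k) (by omega)
    rw [Nat.sub_add_cancel (by omega)] at hsplit
    rw [Nat.cast_sub (by omega)] at hlow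
    linarith

lemma exists_forall_le_mul_of_forall_gt {X : Type*} [TopologicalSpace X] [CompactSpace X]
    {f : ℕ → X → ℝ} (hf : ∀ n, Continuous (f n)) {β : ℝ}
    (h : ∀ b, β < b → ∀ i : ℕ, ∃ y, ∀ k ≤ i, f k y ≤ k * b) : ∃ y, ∀ k, f k y ≤ k * β := by
  let K (i : ℕ) : Set X := {y | ∀ k ≤ i, f k y ≤ k * (β + 1 / (i + 1))}
  have hclosed (i : ℕ) : IsClosed (K i) := by
    simp only [K, Set.ofPred_forall]
    exact isClosed_iInter fun k => isClosed_iInter fun _ => isClosed_le (hf k) continuous_const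
  have hanti (i : ℕ) : K (i + 1) ⊆ K i := fun y hy k hk => by
    refine (hy k (hk.trans i.le_succ)).trans ?_
    gcongr
    simp
  obtain ⟨y, hy⟩ := IsCompact.nonempty_iInter_of_sequence_nonempty_isCompact_isClosed K hanti
    (fun i => h _ (lt_add_of_pos_right β (by positivity)) i) (hclosed 0).isCompact hclosed
  refine ⟨y, fun k => ?_⟩
  have hlim : Tendsto (fun i : ℕ => k * (β + 1 / ((i : ℝ) + 1))) atTop (𝓝 (k * β)) := by
    simpa using (tendsto_one_div_add_atTop_nhds_zero_nat.const_add β).const_mul (k : ℝ)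
  refine ge_of_tendsto hlim ?_
  filter_upwards [eventually_ge_atTop k] with i hi using Set.mem_iInter.1 hy i k hi

theorem exists_calibrated_point {X : Type*} [TopologicalSpace X] [CompactSpace X] [Nonempty X]
    {f : ℕ → X → ℝ} (hf : ∀ n, Continuous (f n))
    (hsuper : ∀ j k c y, (∀ z, c ≤ f j z) → c + f k y ≤ f (j + k) y)
    {R : ℝ} (hR : ∀ (n : ℕ) y, |f n y| ≤ n * R) :
    ∃ β, (∀ ε > 0, ∀ᶠ n : ℕ in atTop, ∀ y, (β - ε) * n ≤ f n y) ∧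
      ∃ y, ∀ k, f k y ≤ k * β := by
  have hmin (n : ℕ) : ∃ x, ∀ y, f n x ≤ f n y := by
    obtain ⟨x, -, hx⟩ := isCompact_univ.exists_isMinOn Set.univ_nonempty (hf n).continuousOn
    exact ⟨x, fun y => hx (Set.mem_univ y)⟩
  choose x hx using hmin
  have hstep (j k y) : f j (x j) + f k y ≤ f (j + k) y := hsuper j k _ y (hx j)
  have hsub : Subadditive fun n => -f n (x n) := fun j k => by
    linarith [hstep j k (x (j + k)), hx k (x (j + k))]
  have hbdd : BddBelow (Set.range fun n : ℕ => -f n (x n) / n) := by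
    refine ⟨-|R|, ?_⟩
    rintro _ ⟨n, rfl⟩
    rcases n.eq_zero_or_pos with rfl | hn
    · simp
    · have hn' : (0 : ℝ) < n := by exact_mod_cast hn
      rw [le_div_iff₀ hn']
      nlinarith [(abs_le.1 (hR n (x n))).2, le_abs_self R]
  have hlim : Tendsto (fun n : ℕ => f n (x n) / n) atTop (𝓝 (-hsub.lim)) := by
    simpa [neg_div] using (hsub.tendsto_lim hbdd).neg
  refine ⟨-hsub.lim, fun ε hε => ?_, exists_forall_le_mul_of_forall_gt hf
    fun b hb => exists_forall_le_of_tendsto_div hstep hlim hb⟩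
  filter_upwards [hlim.eventually_const_lt (sub_lt_self _ hε), eventually_gt_atTop 0]
    with n hn hn0 y
  have hn0' : (0 : ℝ) < n := by exact_mod_cast hn0
  exact ((lt_div_iff₀ hn0').1 hn).le.trans (hx n y)

lemma integral_max_zero_le {Ω : Type*} [MeasurableSpace Ω] {P : Measure Ω}
    [IsProbabilityMeasure P] {X : Ω → ℝ} {α b C : ℝ} (hα : 0 < α) (hb : 0 ≤ b)
    (hint : Integrable (fun ω => Real.exp (α * X ω)) P)
    (hC : ∫ ω, Real.exp (α * X ω) ∂P ≤ C * Real.exp (α * b)) :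
    ∫ ω, max 0 (X ω) ∂P ≤ b + C / α := by
  have hpt (ω : Ω) : max 0 (X ω) ≤ b + Real.exp (-(α * b)) / α * Real.exp (α * X ω) := by
    have hexp : α * (X ω - b) ≤ Real.exp (-(α * b)) * Real.exp (α * X ω) := by
      rw [← Real.exp_add]
      linarith [Real.add_one_le_exp (-(α * b) + α * X ω)]
    rw [div_mul_eq_mul_div, ← sub_le_iff_le_add', le_div_iff₀ hα]
    rcases max_cases 0 (X ω) with ⟨h, -⟩ | ⟨h, -⟩ <;> rw [h]
    · exact (mul_nonpos_of_nonpos_of_nonneg (by linarith) hα.le).trans (by positivity)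
    · linarith
  calc ∫ ω, max 0 (X ω) ∂P
      ≤ ∫ ω, (b + Real.exp (-(α * b)) / α * Real.exp (α * X ω)) ∂P :=
        integral_mono_of_nonneg (.of_forall fun ω => le_max_left _ _)
          ((integrable_const _).add (hint.const_mul _)) (.of_forall hpt)
    _ = b + Real.exp (-(α * b)) / α * ∫ ω, Real.exp (α * X ω) ∂P := by
        rw [integral_add (integrable_const _) (hint.const_mul _), integral_const_mul]
        simp
    _ ≤ b + Real.exp (-(α * b)) / α * (C * Real.exp (α * b)) := by gcongr
    _ = b + C / α := by
        rw [Real.exp_neg]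
        field_simp

namespace IsCocycle

variable {Y : Type*} {σ : Y → GLd d → ℝ} {μ : Measure (GLd d)} [IsProbabilityMeasure μ]

theorem eventually_integral_max_le (hσ : IsCocycle σ) (hμ : CompactlySupported μ) {β : ℝ}
    (hβ : ∀ ε > 0, ∀ᶠ n : ℕ in atTop, ∀ y, (β - ε) * n ≤ ∫ g, σ y g ∂mconvN μ n)
    {ε : ℝ} (hε : 0 < ε) :
    ∀ᶠ n : ℕ in atTop, ∀ y, ∫ g, max 0 (n * β - σ y g) ∂mconvN μ n ≤ ε * n := by
  obtain ⟨N, hdrift, hN⟩ := ((hβ (ε / 4) (by positivity)).and (eventually_gt_atTop 0)).exists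
  have hN' : (0 : ℝ) < N := by exact_mod_cast hN
  obtain ⟨α, C, hα0, -, -, hexp⟩ := hσ.neg.exists_integral_exp_le hμ hN
    (b := -(β - ε / 2)) (c := -((β - ε / 4) * N))
    (fun y => by rw [integral_neg]; exact neg_le_neg (hdrift y)) (by nlinarith)
  filter_upwards [tendsto_natCast_atTop_atTop.eventually_ge_atTop (C / α / (ε / 2))] with n hn y
  rw [div_le_iff₀ (by positivity)] at hn
  have hshift (g : GLd d) : Real.exp (α * (n * β - σ y g)) =
      Real.exp (α * (n * β)) * Real.exp (α * -σ y g) := by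
    rw [← Real.exp_add]
    ring_nf
  have hmoment : ∫ g, Real.exp (α * (n * β - σ y g)) ∂mconvN μ n ≤
      C * Real.exp (α * (ε / 2 * n)) := by
    calc ∫ g, Real.exp (α * (n * β - σ y g)) ∂mconvN μ n
        = Real.exp (α * (n * β)) * ∫ g, Real.exp (α * -σ y g) ∂mconvN μ n := by
          simp only [hshift, integral_const_mul]
      _ ≤ Real.exp (α * (n * β)) * (C * Real.exp (α * -(β - ε / 2) * n)) := by
          gcongr
          exact hexp n y
      _ = C * Real.exp (α * (ε / 2 * n)) := by
          rw [mul_left_comm, ← Real.exp_add]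
          ring_nf
  have hint : Integrable (fun g => Real.exp (α * (n * β - σ y g))) (mconvN μ n) := by
    simp only [hshift]
    exact ((hμ.convPow n).integrable (hσ.neg.continuous_exp α y)).const_mul _
  linarith [integral_max_zero_le hα0 (by positivity) hint hmoment]

lemma continuous_integral [TopologicalSpace Y] (hσ : IsCocycle σ) (hμ : CompactlySupported μ)
    (hY : ∀ g, Continuous fun y => σ y g) [FirstCountableTopology Y] :
    Continuous fun y => ∫ g, σ y g ∂μ := by
  obtain ⟨κ, hκ, hσκ⟩ := hσ.exists_abs_le
  exact continuous_of_dominated (fun y => (hσ.continuous y).aestronglyMeasurable)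
    (fun y => .of_forall (hσκ y)) (hμ.integrable hκ) (.of_forall hY)

theorem exists_calibrated [TopologicalSpace Y] [CompactSpace Y] [FirstCountableTopology Y]
    [Nonempty Y] (hσ : IsCocycle σ) (hμ : CompactlySupported μ)
    (hY : ∀ g, Continuous fun y => σ y g) :
    ∃ β, (∀ ε > 0, ∀ᶠ n : ℕ in atTop, ∀ y, (β - ε) * n ≤ ∫ g, σ y g ∂mconvN μ n) ∧
      ∃ y, ∀ n : ℕ, ∫ g, σ y g ∂mconvN μ n ≤ n * β := by
  obtain ⟨R, hR⟩ := hσ.exists_abs_integral_le hμ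
  refine exists_calibrated_point (fun n => hσ.continuous_integral (hμ.convPow n) hY)
    (fun j k c y hc => ?_) hR
  rw [mconvN_add]
  exact hσ.add_integral_le_integral_mconv (hμ.convPow j) (hμ.convPow k) hc y

end IsCocycle

end Calibration

section LinearAction

lemma glCLM_mul (g h : GLd d) : glCLM (g * h) = glCLM g * glCLM h := by simp [glCLM]

lemma glCLM_mul_apply (g h : GLd d) (v : Ed d) : glCLM (g * h) v = glCLM g (glCLM h v) := by
  rw [glCLM_mul]; rfl

lemma glCLM_one_apply (v : Ed d) : glCLM (1 : GLd d) v = v := by simp [glCLM]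

@[fun_prop]
lemma continuous_glCLM : Continuous (glCLM : GLd d → Ed d →L[ℝ] Ed d) := by
  have hlin : Continuous fun A : Matrix (Fin d) (Fin d) ℝ =>
      (Matrix.toEuclideanCLM (𝕜 := ℝ) A : Ed d →L[ℝ] Ed d) :=
    LinearMap.continuous_of_finiteDimensional
      (Matrix.toEuclideanCLM (𝕜 := ℝ) (n := Fin d)).toAlgEquiv.toLinearMap
  exact hlin.comp Units.continuous_val

lemma glCLM_ne_zero (g : GLd d) {v : Ed d} (hv : v ≠ 0) : glCLM g v ≠ 0 := fun h =>
  hv (by rw [← glCLM_leftInv g v, h, map_zero])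

lemma norm_le_norm_glCLM_inv_mul (g : GLd d) (v : Ed d) :
    ‖v‖ ≤ ‖glCLM g⁻¹‖ * ‖glCLM g v‖ := by
  simpa only [glCLM_leftInv] using (glCLM g⁻¹).le_opNorm (glCLM g v)

lemma map_glCLM_eq_of_le {g : GLd d} {V : Submodule ℝ (Ed d)}
    (h : V.map (glCLM g).toLinearMap ≤ V) : V.map (glCLM g).toLinearMap = V :=
  Submodule.eq_of_le_of_finrank_eq h
    (Submodule.equivMapOfInjective _ (glLinear_injective g) V).finrank_eq.symm

/-- The logarithmic growth `log ‖g u‖` of a unit vector, the cocycle behind `L₁`. -/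
def logNorm (u : Metric.sphere (0 : Ed d) 1) (g : GLd d) : ℝ := Real.log ‖glCLM g u‖

lemma norm_glCLM_unit_pos (g : GLd d) (u : Metric.sphere (0 : Ed d) 1) : 0 < ‖glCLM g u‖ :=
  norm_pos_iff.2 (glCLM_ne_zero g (ne_zero_of_mem_unit_sphere u))

lemma logNorm_unit_add (u : Metric.sphere (0 : Ed d) 1) (h : GLd d) :
    ∃ z, ∀ g, logNorm u (g * h) = logNorm z g + logNorm u h := by
  have hpos := norm_glCLM_unit_pos h u
  refine ⟨⟨‖glCLM h u‖⁻¹ • glCLM h u, by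
    rw [mem_sphere_zero_iff_norm, norm_smul, norm_inv, norm_norm, inv_mul_cancel₀ hpos.ne']⟩,
    fun g => ?_⟩
  have hpos' := norm_glCLM_unit_pos (g * h) u
  rw [glCLM_mul_apply] at hpos'
  rw [logNorm, logNorm, logNorm, map_smul, norm_smul, norm_inv, norm_norm, glCLM_mul_apply,
    Real.log_mul (inv_ne_zero hpos.ne') hpos'.ne', Real.log_inv]
  ring

lemma abs_logNorm_le (u : Metric.sphere (0 : Ed d) 1) (g : GLd d) :
    |logNorm u g| ≤ ‖glCLM g‖ + ‖glCLM g⁻¹‖ := by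
  have hu : ‖(u : Ed d)‖ = 1 := norm_eq_of_mem_sphere u
  have hpos := norm_glCLM_unit_pos g u
  have hupper : ‖glCLM g u‖ ≤ ‖glCLM g‖ := by
    simpa only [hu, mul_one] using (glCLM g).le_opNorm u
  have hlower : ‖glCLM g u‖⁻¹ ≤ ‖glCLM g⁻¹‖ := by
    rw [inv_le_iff_one_le_mul₀ hpos]
    exact hu.ge.trans (norm_le_norm_glCLM_inv_mul g u)
  have hlog := Real.log_le_self hpos.le
  have hlog' := Real.log_le_self (inv_pos.2 hpos).le
  rw [Real.log_inv] at hlog'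
  rw [logNorm, abs_le]
  constructor <;> linarith [norm_nonneg (glCLM g), norm_nonneg (glCLM g⁻¹)]

lemma isCocycle_logNorm : IsCocycle (logNorm (d := d)) where
  continuous u := Continuous.log (by fun_prop) fun g => (norm_glCLM_unit_pos g u).ne'
  one u := by rw [logNorm, glCLM_one_apply, norm_eq_of_mem_sphere, Real.log_one]
  exists_mul := logNorm_unit_add
  exists_abs_le := ⟨fun g => ‖glCLM g‖ + ‖glCLM g⁻¹‖, by fun_prop, abs_logNorm_le⟩

lemma continuous_logNorm_left (g : GLd d) : Continuous fun u => logNorm u g :=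
  Continuous.log (by fun_prop) fun u => (norm_glCLM_unit_pos g u).ne'

end LinearAction

section LyapunovExponent

variable {μ : Measure (GLd d)} [IsProbabilityMeasure μ]

lemma tendsto_integral_mconvN_div (hμ : CompactlySupported μ) {F : GLd d → ℝ}
    (hF : Continuous F) (hmul : ∀ n, ∀ᵐ h ∂mconvN μ n, ∀ g, F (g * h) ≤ F g + F h) {R : ℝ}
    (hR : ∀ n : ℕ, -(n * R) ≤ ∫ g, F g ∂mconvN μ n) :
    Tendsto (fun n : ℕ => (n : ℝ)⁻¹ * ∫ g, F g ∂mconvN μ n) atTop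
      (𝓝 (limUnder atTop fun n : ℕ => (n : ℝ)⁻¹ * ∫ g, F g ∂mconvN μ n)) := by
  have hint (n : ℕ) : Integrable F (mconvN μ n) := (hμ.convPow n).integrable hF
  have hsub : Subadditive fun n => ∫ g, F g ∂mconvN μ n := fun m n => by
    beta_reduce
    rw [mconvN_add, (hμ.convPow m).integral_mconv (hμ.convPow n) hF]
    calc ∫ h, ∫ g, F (g * h) ∂mconvN μ m ∂mconvN μ n
        ≤ ∫ h, (∫ g, F g ∂mconvN μ m + F h) ∂mconvN μ n := by
          refine integral_mono_ae ((hμ.convPow m).integrable_integral (hμ.convPow n) hF)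
            ((integrable_const _).add (hint n)) ?_
          filter_upwards [hmul n] with h hh
          calc ∫ g, F (g * h) ∂mconvN μ m ≤ ∫ g, (F g + F h) ∂mconvN μ m :=
                integral_mono ((hμ.convPow m).integrable (by fun_prop))
                  ((hint m).add (integrable_const _)) hh
            _ = ∫ g, F g ∂mconvN μ m + F h := by
                rw [integral_add (hint m) (integrable_const _)]; simp
      _ = ∫ g, F g ∂mconvN μ m + ∫ g, F g ∂mconvN μ n := by
          rw [integral_add (integrable_const _) (hint n)]; simp
  have hbdd : BddBelow (Set.range fun n : ℕ => (∫ g, F g ∂mconvN μ n) / n) := by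
    refine ⟨-|R|, ?_⟩
    rintro _ ⟨n, rfl⟩
    rcases n.eq_zero_or_pos with rfl | hn
    · simp
    · have hn' : (0 : ℝ) < n := by exact_mod_cast hn
      rw [le_div_iff₀ hn']
      nlinarith [hR n, le_abs_self R]
  refine tendsto_nhds_limUnder ⟨hsub.lim, ?_⟩
  simpa only [div_eq_inv_mul] using hsub.tendsto_lim hbdd

/-- The operator norm of the restriction of `g` to `V`, written with `Submodule.subtypeL` instead
of the restricted linear map of `L1rest`. -/
def restNorm (V : Submodule ℝ (Ed d)) (g : GLd d) : ℝ := ‖(glCLM g).comp V.subtypeL‖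

lemma L1rest_eq (μ : Measure (GLd d)) (V : Submodule ℝ (Ed d)) : L1rest μ V =
    limUnder atTop fun n : ℕ => (n : ℝ)⁻¹ * ∫ g, Real.log (restNorm V g) ∂mconvN μ n :=
  rfl

lemma norm_glCLM_le_restNorm_mul (g : GLd d) {V : Submodule ℝ (Ed d)} {v : Ed d} (hv : v ∈ V) :
    ‖glCLM g v‖ ≤ restNorm V g * ‖v‖ :=
  ((glCLM g).comp V.subtypeL).le_opNorm ⟨v, hv⟩

lemma restNorm_nonneg (V : Submodule ℝ (Ed d)) (g : GLd d) : 0 ≤ restNorm V g :=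
  norm_nonneg ((glCLM g).comp V.subtypeL)

lemma restNorm_le {V : Submodule ℝ (Ed d)} {g : GLd d} {M : ℝ} (hM : 0 ≤ M)
    (h : ∀ v ∈ V, ‖glCLM g v‖ ≤ M * ‖v‖) : restNorm V g ≤ M :=
  ContinuousLinearMap.opNorm_le_bound _ hM fun v => h v v.2

lemma restNorm_top (g : GLd d) : restNorm ⊤ g = gnorm g := by
  refine le_antisymm (restNorm_le (norm_nonneg _) fun v _ => (glCLM g).le_opNorm v) ?_
  exact ContinuousLinearMap.opNorm_le_bound _ (restNorm_nonneg _ _) fun v =>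
    norm_glCLM_le_restNorm_mul g Submodule.mem_top

lemma L1_eq_L1rest_top (μ : Measure (GLd d)) : L1 μ = L1rest μ ⊤ := by
  simp only [L1, L1rest_eq, restNorm_top]

lemma exists_unit_mem {V : Submodule ℝ (Ed d)} (hV : V ≠ ⊥) :
    ∃ u : Metric.sphere (0 : Ed d) 1, (u : Ed d) ∈ V := by
  obtain ⟨v, hv, hv0⟩ := V.ne_bot_iff.1 hV
  refine ⟨⟨‖v‖⁻¹ • v, ?_⟩, V.smul_mem _ hv⟩
  rw [mem_sphere_zero_iff_norm, norm_smul, norm_inv, norm_norm,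
    inv_mul_cancel₀ (norm_ne_zero_iff.2 hv0)]

lemma norm_glCLM_unit_le_restNorm (g : GLd d) {V : Submodule ℝ (Ed d)}
    {u : Metric.sphere (0 : Ed d) 1} (hu : (u : Ed d) ∈ V) : ‖glCLM g u‖ ≤ restNorm V g := by
  simpa only [norm_eq_of_mem_sphere, mul_one] using norm_glCLM_le_restNorm_mul g hu

lemma restNorm_pos {V : Submodule ℝ (Ed d)} (hV : V ≠ ⊥) (g : GLd d) : 0 < restNorm V g := by
  obtain ⟨u, hu⟩ := exists_unit_mem hV
  exact (norm_glCLM_unit_pos g u).trans_le (norm_glCLM_unit_le_restNorm g hu)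

lemma continuous_log_restNorm {V : Submodule ℝ (Ed d)} (hV : V ≠ ⊥) :
    Continuous fun g : GLd d => Real.log (restNorm V g) :=
  Continuous.log (continuous_glCLM.clm_comp continuous_const).norm
    fun g => (restNorm_pos hV g).ne'

lemma restNorm_mul_le {V : Submodule ℝ (Ed d)} (g : GLd d) {h : GLd d}
    (hh : ∀ v ∈ V, glCLM h v ∈ V) : restNorm V (g * h) ≤ restNorm V g * restNorm V h := by
  refine restNorm_le (mul_nonneg (restNorm_nonneg _ _) (restNorm_nonneg _ _)) fun v hv => ?_
  rw [glCLM_mul_apply, mul_assoc]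
  refine (norm_glCLM_le_restNorm_mul g (hh v hv)).trans ?_
  gcongr
  · exact restNorm_nonneg V g
  · exact norm_glCLM_le_restNorm_mul h hv

lemma ae_mconvN_mapsTo {V : Submodule ℝ (Ed d)}
    (hV : ∀ᵐ g ∂μ, V.map (glCLM g).toLinearMap = V) (n : ℕ) :
    ∀ᵐ g ∂mconvN μ n, ∀ v ∈ V, glCLM g v ∈ V := by
  refine ae_mconvN (p := fun _ g => ∀ v ∈ V, glCLM g v ∈ V) (fun _ => ?_) (fun v hv => ?_) ?_ n
  · simp only [Set.ofPred_forall]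
    exact (isClosed_iInter fun v => isClosed_iInter fun _ =>
      V.closed_of_finiteDimensional.preimage (f := fun g : GLd d => glCLM g v)
        (by fun_prop)).measurableSet
  · rwa [glCLM_one_apply]
  · filter_upwards [hV] with h hh _ g hg v hv
    rw [glCLM_mul_apply]
    exact hg _ (hh.le ⟨v, hv, rfl⟩)

theorem tendsto_L1rest (hμ : CompactlySupported μ) {V : Submodule ℝ (Ed d)} (hV : V ≠ ⊥)
    (hinv : ∀ᵐ g ∂μ, V.map (glCLM g).toLinearMap = V) :
    Tendsto (fun n : ℕ => (n : ℝ)⁻¹ * ∫ g, Real.log (restNorm V g) ∂mconvN μ n) atTop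
      (𝓝 (L1rest μ V)) := by
  obtain ⟨u, hu⟩ := exists_unit_mem hV
  obtain ⟨R, hR⟩ := isCocycle_logNorm.exists_abs_integral_le hμ
  have hcont := continuous_log_restNorm hV
  refine tendsto_integral_mconvN_div hμ hcont (fun n => ?_) (R := R) fun n => ?_
  · filter_upwards [ae_mconvN_mapsTo hinv n] with h hh g
    rw [← Real.log_mul (restNorm_pos hV g).ne' (restNorm_pos hV h).ne']
    exact Real.log_le_log (restNorm_pos hV _) (restNorm_mul_le g hh)
  · refine (abs_le.1 (hR n u)).1.trans (integral_mono
      ((hμ.convPow n).integrable (isCocycle_logNorm.continuous u))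
      ((hμ.convPow n).integrable hcont) fun g => ?_)
    exact Real.log_le_log (norm_glCLM_unit_pos g u) (norm_glCLM_unit_le_restNorm g hu)

end LyapunovExponent

section SlowSubspace

lemma ae_summable_of_summable_integral {Ω : Type*} [MeasurableSpace Ω] {P : Measure Ω}
    {f : ℕ → Ω → ℝ} (hf : ∀ i, Integrable (f i) P) (hf0 : ∀ i ω, 0 ≤ f i ω)
    (hsum : Summable fun i => ∫ ω, f i ω ∂P) : ∀ᵐ ω ∂P, Summable fun i => f i ω := by
  have hnorm (i : ℕ) : eLpNorm (f i) 1 P = ENNReal.ofReal (∫ ω, f i ω ∂P) := by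
    rw [eLpNorm_one_eq_lintegral_enorm, ← ofReal_integral_norm_eq_lintegral_enorm (hf i)]
    simp only [Real.norm_of_nonneg (hf0 i _)]
  have hfin : ∑' i, eLpNorm (f i) 1 P ≠ ⊤ := by
    simpa only [hnorm] using hsum.tsum_ofReal_ne_top
  filter_upwards [summable_norm_of_tsum_eLpNorm_ne_top le_rfl
    (fun i => (hf i).aestronglyMeasurable) hfin] with ω hω
  simpa only [Real.norm_of_nonneg (hf0 _ ω)] using hω

/-- The mean excess `𝔼 log⁺ (‖g v‖ e^{-nβ})` of the growth of `v` after `n` steps over the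
rate `β`. -/
def excess (μ : Measure (GLd d)) (β : ℝ) (n : ℕ) (v : Ed d) : ℝ :=
  ∫ g, Real.posLog (‖glCLM g v‖ * Real.exp (-(n * β))) ∂mconvN μ n

lemma continuous_posLog_norm_glCLM_mul (c : ℝ) (v : Ed d) :
    Continuous fun g : GLd d => Real.posLog (‖glCLM g v‖ * c) :=
  Real.continuous_posLog.comp (by fun_prop)

lemma excess_nonneg (μ : Measure (GLd d)) (β : ℝ) (n : ℕ) (v : Ed d) : 0 ≤ excess μ β n v :=
  integral_nonneg fun _ => Real.posLog_nonneg

lemma excess_div_nonneg (μ : Measure (GLd d)) (β : ℝ) (n : ℕ) (v : Ed d) :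
    0 ≤ excess μ β n v / n :=
  div_nonneg (excess_nonneg μ β n v) n.cast_nonneg

variable {μ : Measure (GLd d)} [IsProbabilityMeasure μ]

lemma integrable_posLog_norm_glCLM_mul (hμ : CompactlySupported μ) (n : ℕ) (c : ℝ) (v : Ed d) :
    Integrable (fun g => Real.posLog (‖glCLM g v‖ * c)) (mconvN μ n) :=
  (hμ.convPow n).integrable (continuous_posLog_norm_glCLM_mul c v)

lemma excess_add_le (hμ : CompactlySupported μ) (β : ℝ) (n : ℕ) (v w : Ed d) :
    excess μ β n (v + w) ≤ Real.log 2 + (excess μ β n v + excess μ β n w) := by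
  have hint := integrable_posLog_norm_glCLM_mul hμ n (Real.exp (-(n * β)))
  have hpt (g : GLd d) : Real.posLog (‖glCLM g (v + w)‖ * Real.exp (-(n * β))) ≤
      Real.log 2 + (Real.posLog (‖glCLM g v‖ * Real.exp (-(n * β))) +
        Real.posLog (‖glCLM g w‖ * Real.exp (-(n * β)))) := by
    rw [← add_assoc]
    refine (Real.posLog_le_posLog (by positivity) ?_).trans Real.posLog_add
    rw [← add_mul, map_add]
    gcongr
    exact norm_add_le _ _
  have hvw := (hint v).add (hint w)
  refine (integral_mono (hint _) ((integrable_const _).add hvw) hpt).trans_eq ?_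
  rw [integral_add' (integrable_const _) hvw, integral_add' (hint v) (hint w)]
  simp [excess]

lemma excess_smul_le (hμ : CompactlySupported μ) (β : ℝ) (n : ℕ) (c : ℝ) (v : Ed d) :
    excess μ β n (c • v) ≤ Real.posLog ‖c‖ + excess μ β n v := by
  have hint := integrable_posLog_norm_glCLM_mul hμ n (Real.exp (-(n * β)))
  have hpt (g : GLd d) : Real.posLog (‖glCLM g (c • v)‖ * Real.exp (-(n * β))) ≤
      Real.posLog ‖c‖ + Real.posLog (‖glCLM g v‖ * Real.exp (-(n * β))) := by
    rw [map_smul, norm_smul, mul_assoc]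
    exact Real.posLog_mul
  refine (integral_mono (hint _) ((integrable_const _).add (hint v)) hpt).trans_eq ?_
  rw [integral_add' (integrable_const _) (hint v)]
  simp [excess]

lemma integrable_excess_glCLM (hμ : CompactlySupported μ) (β : ℝ) (n : ℕ) (v : Ed d) :
    Integrable (fun h => excess μ β n (glCLM h v)) μ := by
  simpa only [excess, glCLM_mul_apply] using (hμ.convPow n).integrable_integral hμ
    (continuous_posLog_norm_glCLM_mul (Real.exp (-(n * β))) v)

/-- Both sides of `μ^{*n} * μ = μ * μ^{*n}` are used: the extra step is taken first on the left
hand side, and last, where it costs `log⁺ ‖g‖`, on the right. -/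
lemma integral_excess_glCLM_le (hμ : CompactlySupported μ) (β : ℝ) (n : ℕ) (v : Ed d) :
    ∫ h, excess μ β n (glCLM h v) ∂μ ≤ ∫ g, Real.posLog ‖glCLM g‖ ∂μ + excess μ β n v := by
  set c := Real.exp (-(n * β))
  have hF := continuous_posLog_norm_glCLM_mul c v
  have hcomm : mconv (mconvN μ n) μ = mconv μ (mconvN μ n) := by
    rw [← mconvN_succ, add_comm, mconvN_add, mconvN_one]
  have hlog : Integrable (fun g => Real.posLog ‖glCLM g‖) μ :=
    hμ.integrable (Real.continuous_posLog.comp (by fun_prop))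
  have hint := integrable_posLog_norm_glCLM_mul hμ n c v
  calc ∫ h, excess μ β n (glCLM h v) ∂μ
      = ∫ h, ∫ g, Real.posLog (‖glCLM (g * h) v‖ * c) ∂mconvN μ n ∂μ := by
        simp only [excess, glCLM_mul_apply, c]
    _ = ∫ h, ∫ g, Real.posLog (‖glCLM (g * h) v‖ * c) ∂μ ∂mconvN μ n := by
        rw [← (hμ.convPow n).integral_mconv hμ hF, hcomm, hμ.integral_mconv (hμ.convPow n) hF]
    _ ≤ ∫ h, (∫ g, Real.posLog ‖glCLM g‖ ∂μ + Real.posLog (‖glCLM h v‖ * c)) ∂mconvN μ n := by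
        refine integral_mono (hμ.integrable_integral (hμ.convPow n) hF)
          ((integrable_const _).add hint) fun h => ?_
        calc ∫ g, Real.posLog (‖glCLM (g * h) v‖ * c) ∂μ
            ≤ ∫ g, (Real.posLog ‖glCLM g‖ + Real.posLog (‖glCLM h v‖ * c)) ∂μ := by
              refine integral_mono (hμ.integrable (hF.comp (continuous_mul_const h)))
                (hlog.add (integrable_const _)) fun g => ?_
              refine (Real.posLog_le_posLog (by positivity) ?_).trans Real.posLog_mul
              rw [glCLM_mul_apply, ← mul_assoc]
              gcongr
              exact (glCLM g).le_opNorm _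
          _ = ∫ g, Real.posLog ‖glCLM g‖ ∂μ + Real.posLog (‖glCLM h v‖ * c) := by
              rw [integral_add hlog (integrable_const _)]; simp
    _ = ∫ g, Real.posLog ‖glCLM g‖ ∂μ + excess μ β n v := by
        rw [integral_add (integrable_const _) hint]; simp [excess, c]

/-- The vectors whose mean growth exceeds the rate `β` summably along the times `s`. Summability,
rather than convergence to `0`, makes this space almost surely invariant. -/
def slowSubspace (hμ : CompactlySupported μ) (β : ℝ) {s : ℕ → ℕ}
    (hs : Summable fun i => (1 : ℝ) / s i) : Submodule ℝ (Ed d) where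
  carrier := {v | Summable fun i => excess μ β (s i) v / s i}
  zero_mem' := by
    have hzero (i : ℕ) : excess μ β (s i) (0 : Ed d) / s i = 0 := by simp [excess]
    simpa only [Set.mem_ofPred_eq, hzero] using summable_zero
  add_mem' {v w} hv hw := by
    refine .of_nonneg_of_le (fun i => excess_div_nonneg μ β (s i) _) (fun i => ?_)
      ((hs.mul_left (Real.log 2)).add (hv.add hw))
    rw [mul_one_div, ← add_div, ← add_div]
    gcongr
    exact excess_add_le hμ β (s i) v w
  smul_mem' c v hv := by
    refine .of_nonneg_of_le (fun i => excess_div_nonneg μ β (s i) _) (fun i => ?_)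
      ((hs.mul_left (Real.posLog ‖c‖)).add hv)
    rw [mul_one_div, ← add_div]
    gcongr
    exact excess_smul_le hμ β (s i) c v

section

variable {β : ℝ} {s : ℕ → ℕ} {hs : Summable fun i => (1 : ℝ) / s i} {hμ : CompactlySupported μ}

lemma mem_slowSubspace {v : Ed d} :
    v ∈ slowSubspace hμ β hs ↔ Summable fun i => excess μ β (s i) v / s i :=
  Iff.rfl

lemma ae_glCLM_mem_slowSubspace {v : Ed d} (hv : v ∈ slowSubspace hμ β hs) :
    ∀ᵐ g ∂μ, glCLM g v ∈ slowSubspace hμ β hs := by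
  refine ae_summable_of_summable_integral
    (fun i => (integrable_excess_glCLM hμ β (s i) v).div_const _)
    (fun i g => excess_div_nonneg μ β (s i) _) ?_
  refine .of_nonneg_of_le (fun i => integral_nonneg fun g => excess_div_nonneg μ β (s i) _)
    (fun i => ?_) ((hs.mul_left (∫ g, Real.posLog ‖glCLM g‖ ∂μ)).add hv)
  rw [integral_div, mul_one_div, ← add_div]
  gcongr
  exact integral_excess_glCLM_le hμ β (s i) v

lemma ae_map_slowSubspace_eq :
    ∀ᵐ g ∂μ, (slowSubspace hμ β hs).map (glCLM g).toLinearMap = slowSubspace hμ β hs := by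
  set V := slowSubspace hμ β hs
  obtain ⟨S, hS⟩ := (IsNoetherian.noetherian V : V.FG)
  have hmem : ∀ᵐ g ∂μ, ∀ v : S, glCLM g v ∈ V :=
    ae_all_iff.2 fun v => ae_glCLM_mem_slowSubspace (hS.le (Submodule.subset_span v.2))
  filter_upwards [hmem] with g hg
  refine map_glCLM_eq_of_le ?_
  rw [Submodule.map_le_iff_le_comap, ← hS, Submodule.span_le, hS]
  exact fun v hv => hg ⟨v, hv⟩

end

lemma restNorm_le_sum {ι : Type*} [Fintype ι] {V : Submodule ℝ (Ed d)}
    (b : OrthonormalBasis ι ℝ V) (g : GLd d) : restNorm V g ≤ ∑ i, ‖glCLM g (b i)‖ := by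
  refine restNorm_le (Finset.sum_nonneg fun i _ => norm_nonneg _) fun v hv => ?_
  have hsum : v = ∑ i, inner ℝ (b i) (⟨v, hv⟩ : V) • (b i : Ed d) := by
    simpa using congrArg Subtype.val (b.sum_repr' ⟨v, hv⟩).symm
  rw [hsum, map_sum, ← hsum, Finset.sum_mul]
  refine (norm_sum_le _ _).trans (Finset.sum_le_sum fun i _ => ?_)
  rw [map_smul, norm_smul, mul_comm]
  gcongr
  simpa using norm_inner_le_norm (𝕜 := ℝ) (b i) (⟨v, hv⟩ : V)

lemma integral_log_restNorm_le {ι : Type*} [Fintype ι] (hμ : CompactlySupported μ)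
    {V : Submodule ℝ (Ed d)} (hV : V ≠ ⊥) (b : OrthonormalBasis ι ℝ V) (β : ℝ) (n : ℕ) :
    ∫ g, Real.log (restNorm V g) ∂mconvN μ n ≤
      n * β + Real.log (Fintype.card ι) + ∑ i, excess μ β n (b i) := by
  set c := Real.exp (-(n * β))
  have hint (i : ι) := integrable_posLog_norm_glCLM_mul hμ n c (b i)
  have hpt (g : GLd d) : Real.log (restNorm V g) ≤ n * β + Real.log (Fintype.card ι) +
      ∑ i, Real.posLog (‖glCLM g (b i)‖ * c) := by
    have hpos := restNorm_pos hV g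
    calc Real.log (restNorm V g) = n * β + Real.log (restNorm V g * c) := by
          rw [Real.log_mul hpos.ne' (Real.exp_pos _).ne', Real.log_exp]; ring
      _ ≤ n * β + Real.posLog (restNorm V g * c) := by gcongr; exact le_max_right _ _
      _ ≤ n * β + Real.posLog (∑ i, ‖glCLM g (b i)‖ * c) := by
          rw [← Finset.sum_mul]
          have : 0 ≤ restNorm V g * c := mul_nonneg hpos.le (Real.exp_pos _).le
          gcongr
          exact restNorm_le_sum b g
      _ ≤ n * β + (Real.log (Fintype.card ι) + ∑ i, Real.posLog (‖glCLM g (b i)‖ * c)) := by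
          gcongr
          exact Real.posLog_sum _ _
      _ = _ := by ring
  have hsum := integrable_finsetSum Finset.univ fun i _ => hint i
  refine (integral_mono ((hμ.convPow n).integrable (continuous_log_restNorm hV))
    ((integrable_const _).add hsum) hpt).trans_eq ?_
  rw [integral_add' (integrable_const _) hsum, integral_finsetSum _ fun i _ => hint i]
  simp [excess, c]

lemma tendsto_atTop_of_summable_one_div {s : ℕ → ℕ} (hpos : ∀ i, 0 < s i)
    (hs : Summable fun i => (1 : ℝ) / s i) : Tendsto s atTop atTop := by
  have hinv : Tendsto (fun i => ((s i : ℝ)⁻¹)⁻¹) atTop atTop := by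
    refine tendsto_inv_nhdsGT_zero.comp (tendsto_nhdsWithin_iff.2 ⟨?_, .of_forall fun i => ?_⟩)
    · simpa only [one_div] using hs.tendsto_atTop_zero
    · exact inv_pos.2 (Nat.cast_pos.2 (hpos i) : (0 : ℝ) < s i)
  simpa only [inv_inv, tendsto_natCast_atTop_iff] using hinv

lemma L1rest_slowSubspace_le (hμ : CompactlySupported μ) {β : ℝ} {s : ℕ → ℕ}
    (hpos : ∀ i, 0 < s i) (hs : Summable fun i => (1 : ℝ) / s i) (hV : slowSubspace hμ β hs ≠ ⊥) :
    L1rest μ (slowSubspace hμ β hs) ≤ β := by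
  set V := slowSubspace hμ β hs
  set b := stdOrthonormalBasis ℝ V
  set k := Fintype.card (Fin (Module.finrank ℝ V))
  have hlim := (tendsto_L1rest hμ hV ae_map_slowSubspace_eq).comp
    (tendsto_atTop_of_summable_one_div hpos hs)
  have hbound : Tendsto (fun i => β + Real.log k * (1 / s i) +
      ∑ j, excess μ β (s i) (b j) / s i) atTop (𝓝 (β + Real.log k * 0 + ∑ j, 0)) :=
    ((hs.tendsto_atTop_zero.const_mul _).const_add β).add
      (tendsto_finsetSum _ fun j _ => (mem_slowSubspace.1 (b j).2).tendsto_atTop_zero)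
  rw [mul_zero, Finset.sum_const_zero, add_zero, add_zero] at hbound
  refine le_of_tendsto_of_tendsto' hlim hbound fun i => ?_
  have hi : (0 : ℝ) < s i := Nat.cast_pos.2 (hpos i)
  calc (s i : ℝ)⁻¹ * ∫ g, Real.log (restNorm V g) ∂mconvN μ (s i)
      ≤ (s i : ℝ)⁻¹ * (s i * β + Real.log k + ∑ j, excess μ β (s i) (b j)) := by
        gcongr
        exact integral_log_restNorm_le hμ hV b β (s i)
    _ = β + Real.log k * (1 / s i) + ∑ j, excess μ β (s i) (b j) / s i := by
        rw [← Finset.sum_div]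
        field_simp

lemma excess_le_integral_max (hμ : CompactlySupported μ) {β : ℝ} {n : ℕ}
    {u : Metric.sphere (0 : Ed d) 1} (hu : ∫ g, logNorm u g ∂mconvN μ n ≤ n * β) :
    excess μ β n u ≤ ∫ g, max 0 (n * β - logNorm u g) ∂mconvN μ n := by
  have hcont := isCocycle_logNorm.continuous u
  have hlog := (hμ.convPow n).integrable hcont
  have hsub : Integrable (fun g => logNorm u g - n * β) (mconvN μ n) :=
    hlog.sub (integrable_const _)
  have hmax : Integrable (fun g => max 0 (n * β - logNorm u g)) (mconvN μ n) :=
    (hμ.convPow n).integrable (by fun_prop)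
  have hpt (g : GLd d) : Real.posLog (‖glCLM g u‖ * Real.exp (-(n * β))) =
      logNorm u g - n * β + max 0 (n * β - logNorm u g) := by
    rw [Real.posLog_apply, Real.log_mul (norm_glCLM_unit_pos g u).ne' (Real.exp_pos _).ne',
      Real.log_exp, ← logNorm, ← sub_eq_add_neg, ← neg_sub (logNorm u g)]
    rcases le_total 0 (logNorm u g - n * β) with h | h
    · rw [max_eq_right h, max_eq_left (neg_nonpos.2 h), add_zero]
    · rw [max_eq_left h, max_eq_right (neg_nonneg.2 h), add_neg_cancel]
  simp only [excess, hpt]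
  rw [integral_add hsub hmax, integral_sub hlog (integrable_const _)]
  simpa using hu

/-- A calibrated vector has negligible mean excess, because its negative deviations are negligible
and its mean deviation is not positive. So it spans a nonzero slow subspace. -/
theorem L1_le_of_quasiIrreducible (hμ : CompactlySupported μ) (hqi : QuasiIrreducible μ) {β : ℝ}
    (hβ : ∀ ε > 0, ∀ᶠ n : ℕ in atTop, ∀ u, (β - ε) * n ≤ ∫ g, logNorm u g ∂mconvN μ n)
    {u : Metric.sphere (0 : Ed d) 1} (hu : ∀ n : ℕ, ∫ g, logNorm u g ∂mconvN μ n ≤ n * β) :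
    L1 μ ≤ β := by
  have htime (i : ℕ) : ∃ n : ℕ, 0 < n ∧ (1 : ℝ) / n ≤ (1 / 2) ^ i ∧
      excess μ β n u ≤ (1 / 2) ^ i * n :=
    (((eventually_gt_atTop 0).and
      (tendsto_one_div_atTop_nhds_zero_nat.eventually_le_const (by positivity))).and
      (isCocycle_logNorm.eventually_integral_max_le hμ hβ (by positivity))).exists.imp
      fun n hn => ⟨hn.1.1, hn.1.2, (excess_le_integral_max hμ (hu n)).trans (hn.2 u)⟩
  choose s hpos hinv hexcess using htime
  have hs : Summable fun i => (1 : ℝ) / s i :=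
    .of_nonneg_of_le (fun i => by positivity) hinv summable_geometric_two
  have hmem : (u : Ed d) ∈ slowSubspace hμ β hs :=
    .of_nonneg_of_le (fun i => excess_div_nonneg μ β (s i) _)
      (fun i => (div_le_iff₀ (Nat.cast_pos.2 (hpos i))).2 (hexcess i)) summable_geometric_two
  have hne : slowSubspace hμ β hs ≠ ⊥ :=
    (Submodule.ne_bot_iff _).2 ⟨u, hmem, ne_zero_of_mem_unit_sphere u⟩
  have hle := L1rest_slowSubspace_le hμ hpos hs hne
  by_cases htop : slowSubspace hμ β hs = ⊤
  · rwa [L1_eq_L1rest_top, ← htop]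
  · by_contra hlt
    exact hqi ⟨_, hne, htop, ae_map_slowSubspace_eq, hle.trans_lt (not_le.1 hlt)⟩

end SlowSubspace

section Area

variable {E F : Type*} [NormedAddCommGroup E] [InnerProductSpace ℝ E]
  [NormedAddCommGroup F] [InnerProductSpace ℝ F]

/-- The area of the parallelogram spanned by two vectors, that is `‖p ∧ q‖`. -/
def area (p q : E) : ℝ := Real.sqrt (‖p‖ ^ 2 * ‖q‖ ^ 2 - (inner ℝ p q : ℝ) ^ 2)

lemma area_nonneg (p q : E) : 0 ≤ area p q := Real.sqrt_nonneg _

lemma area_zero_left (q : E) : area 0 q = 0 := by simp [area]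

lemma area_self (p : E) : area p p = 0 := by
  rw [area, real_inner_self_eq_norm_sq, ← sq, sub_self, Real.sqrt_zero]

lemma area_comm (p q : E) : area p q = area q p := by
  rw [area, area, real_inner_comm, mul_comm]

lemma area_smul_left (c : ℝ) (p q : E) : area (c • p) q = |c| * area p q := by
  rw [area, area, norm_smul, real_inner_smul_left, ← Real.sqrt_sq_eq_abs,
    ← Real.sqrt_mul (sq_nonneg c), Real.norm_eq_abs, mul_pow, sq_abs]
  ring_nf

lemma area_smul_right (c : ℝ) (p q : E) : area p (c • q) = |c| * area p q := by
  rw [area_comm, area_smul_left, area_comm]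

lemma area_sub_smul_right (c : ℝ) (p q : E) : area p (q - c • p) = area p q := by
  rw [area, area, inner_sub_right, norm_sub_sq_real, norm_smul, Real.norm_eq_abs, mul_pow, sq_abs,
    real_inner_smul_right, real_inner_smul_right, real_inner_self_eq_norm_sq, real_inner_comm]
  ring_nf

lemma area_le_norm_mul_norm (p q : E) : area p q ≤ ‖p‖ * ‖q‖ :=
  Real.sqrt_le_iff.2 ⟨by positivity, by nlinarith [sq_nonneg (inner ℝ p q : ℝ)]⟩

lemma area_of_inner_eq_zero {p q : E} (h : inner ℝ p q = 0) : area p q = ‖p‖ * ‖q‖ := by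
  rw [area, h, zero_pow two_ne_zero, sub_zero, ← mul_pow, Real.sqrt_sq (by positivity)]

@[fun_prop]
lemma continuous_area {X : Type*} [TopologicalSpace X] {f g : X → E} (hf : Continuous f)
    (hg : Continuous g) : Continuous fun x => area (f x) (g x) := by
  unfold area
  fun_prop

lemma exists_inner_sub_smul_eq_zero (p q : E) : ∃ c : ℝ, inner ℝ p (q - c • p) = 0 := by
  rcases eq_or_ne p 0 with rfl | hp
  · exact ⟨0, inner_zero_left _⟩
  · refine ⟨inner ℝ p q / ‖p‖ ^ 2, ?_⟩
    rw [inner_sub_right, real_inner_smul_right, real_inner_self_eq_norm_sq,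
      div_mul_cancel₀ _ (pow_ne_zero 2 (norm_ne_zero_iff.2 hp)), sub_self]

lemma exists_eq_smul_of_area_eq_zero {p q : E} (hp : p ≠ 0) (h : area p q = 0) :
    ∃ c : ℝ, q = c • p := by
  obtain ⟨c, hc⟩ := exists_inner_sub_smul_eq_zero p q
  rw [← area_sub_smul_right c, area_of_inner_eq_zero hc, mul_eq_zero, norm_eq_zero, norm_eq_zero,
    or_iff_right hp] at h
  exact ⟨c, sub_eq_zero.1 h⟩

lemma area_map_le_of_orthonormal (A : E →ₗ[ℝ] F) {c : ℝ}
    (h : ∀ p q, ‖p‖ = 1 → ‖q‖ = 1 → inner ℝ p q = 0 → area (A p) (A q) ≤ c) (p q : E) :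
    area (A p) (A q) ≤ c * area p q := by
  have horth (p q : E) (hpq : inner ℝ p q = 0) : area (A p) (A q) ≤ c * (‖p‖ * ‖q‖) := by
    rcases eq_or_ne p 0 with rfl | hp
    · simp [area_zero_left]
    rcases eq_or_ne q 0 with rfl | hq
    · simp [area_comm _ (0 : F), area_zero_left]
    have hunit := h (‖p‖⁻¹ • p) (‖q‖⁻¹ • q) (norm_smul_inv_norm hp)
      (norm_smul_inv_norm hq) (by rw [real_inner_smul_left, real_inner_smul_right, hpq]; simp)
    rw [map_smul, map_smul, area_smul_left, area_smul_right, abs_inv, abs_inv, abs_norm,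
      abs_norm, ← mul_assoc, ← mul_inv, inv_mul_le_iff₀ (by positivity)] at hunit
    rwa [mul_comm]
  obtain ⟨t, ht⟩ := exists_inner_sub_smul_eq_zero p q
  rw [← area_sub_smul_right t, ← map_smul, ← map_sub, ← area_sub_smul_right t p q,
    area_of_inner_eq_zero ht]
  exact horth p _ ht

lemma area_map_le (A : E →L[ℝ] F) (p q : E) : area (A p) (A q) ≤ ‖A‖ ^ 2 * area p q := by
  refine area_map_le_of_orthonormal (A : E →ₗ[ℝ] F) (fun p q hp hq _ => ?_) p q
  refine (area_le_norm_mul_norm _ _).trans ?_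
  rw [sq]
  gcongr
  · exact A.unit_le_opNorm p hp.le
  · exact A.unit_le_opNorm q hq.le

end Area

section SecondExponent

lemma area_glCLM_pos (g : GLd d) {p q : Ed d} (h : 0 < area p q) :
    0 < area (glCLM g p) (glCLM g q) := by
  have hle := area_map_le (glCLM g⁻¹) (glCLM g p) (glCLM g q)
  rw [glCLM_leftInv, glCLM_leftInv] at hle
  exact pos_of_mul_pos_right (h.trans_le hle) (sq_nonneg _)

lemma log_area_glCLM_le (g : GLd d) {p q : Ed d} (h : 0 < area p q) :
    Real.log (area (glCLM g p) (glCLM g q)) ≤ 2 * ‖glCLM g‖ + Real.log (area p q) := by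
  have hpos := area_glCLM_pos g h
  have hnorm : 0 < ‖glCLM g‖ ^ 2 :=
    pos_of_mul_pos_left (hpos.trans_le (area_map_le _ p q)) (area_nonneg p q)
  calc Real.log (area (glCLM g p) (glCLM g q)) ≤ Real.log (‖glCLM g‖ ^ 2 * area p q) :=
        Real.log_le_log hpos (area_map_le _ p q)
    _ = 2 * Real.log ‖glCLM g‖ + Real.log (area p q) := by
        rw [Real.log_mul hnorm.ne' h.ne', Real.log_pow, Nat.cast_ofNat]
    _ ≤ 2 * ‖glCLM g‖ + Real.log (area p q) := by
        gcongr
        exact Real.log_le_self (norm_nonneg _)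

/-- The orthonormal pairs of vectors, over which `N2` is a supremum of areas. -/
def orthonormalPairs (d : ℕ) : Set (Ed d × Ed d) :=
  {x | ‖x.1‖ = 1 ∧ ‖x.2‖ = 1 ∧ inner ℝ x.1 x.2 = 0}

lemma area_of_mem_orthonormalPairs {x : Ed d × Ed d} (hx : x ∈ orthonormalPairs d) :
    area x.1 x.2 = 1 := by
  rw [area_of_inner_eq_zero hx.2.2, hx.1, hx.2.1, one_mul]

lemma isCompact_orthonormalPairs : IsCompact (orthonormalPairs d) := by
  refine ((isCompact_sphere (0 : Ed d) 1).prod (isCompact_sphere (0 : Ed d) 1)).of_isClosed_subset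
    ?_ fun x hx => ?_
  · simp only [orthonormalPairs, Set.ofPred_and]
    exact (isClosed_eq (by fun_prop) continuous_const).inter
      ((isClosed_eq (by fun_prop) continuous_const).inter
        (isClosed_eq (by fun_prop) continuous_const))
  · exact ⟨mem_sphere_zero_iff_norm.2 hx.1, mem_sphere_zero_iff_norm.2 hx.2.1⟩

lemma nonempty_orthonormalPairs (hd : 2 ≤ d) : (orthonormalPairs d).Nonempty := by
  have h := (EuclideanSpace.basisFun (Fin d) ℝ).orthonormal
  exact ⟨(_, _), h.1 ⟨0, by omega⟩, h.1 ⟨1, by omega⟩, h.2 (by simp)⟩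

lemma N2_eq_sSup_image (g : GLd d) :
    N2 g = sSup ((fun x => area (glCLM g x.1) (glCLM g x.2)) '' orthonormalPairs d) := by
  rw [N2]
  congr 1
  ext a
  exact ⟨fun ⟨p, q, hp, hq, hpq, ha⟩ => ⟨(p, q), ⟨hp, hq, hpq⟩, ha.symm⟩,
    fun ⟨x, ⟨hp, hq, hpq⟩, ha⟩ => ⟨x.1, x.2, hp, hq, hpq, ha.symm⟩⟩

lemma continuous_N2 : Continuous (N2 : GLd d → ℝ) := by
  have hcont : Continuous (Function.uncurry fun (g : GLd d) (x : Ed d × Ed d) =>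
      area (glCLM g x.1) (glCLM g x.2)) := by
    unfold Function.uncurry
    fun_prop
  exact (isCompact_orthonormalPairs.continuous_sSup hcont).congr fun g =>
    (N2_eq_sSup_image g).symm

lemma N2_nonneg (g : GLd d) : 0 ≤ N2 g := by
  rw [N2_eq_sSup_image]
  exact Real.sSup_nonneg (Set.forall_mem_image.2 fun _ _ => area_nonneg _ _)

lemma area_glCLM_le (g : GLd d) (p q : Ed d) :
    area (glCLM g p) (glCLM g q) ≤ N2 g * area p q := by
  refine area_map_le_of_orthonormal (glCLM g).toLinearMap (fun p q hp hq hpq => ?_) p q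
  rw [N2_eq_sSup_image]
  exact le_csSup (isCompact_orthonormalPairs.bddAbove_image (by fun_prop))
    ⟨(p, q), ⟨hp, hq, hpq⟩, rfl⟩

lemma N2_pos (hd : 2 ≤ d) (g : GLd d) : 0 < N2 g := by
  obtain ⟨x, hx⟩ := nonempty_orthonormalPairs hd
  have harea := area_of_mem_orthonormalPairs hx
  have hpos := area_glCLM_pos g (harea.symm ▸ one_pos : 0 < area x.1 x.2)
  simpa only [harea, mul_one] using hpos.trans_le (area_glCLM_le g x.1 x.2)

lemma N2_mul_le (g h : GLd d) : N2 (g * h) ≤ N2 g * N2 h := by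
  rw [N2_eq_sSup_image (g * h)]
  refine Real.sSup_le (Set.forall_mem_image.2 fun x hx => ?_)
    (mul_nonneg (N2_nonneg g) (N2_nonneg h))
  simp only [glCLM_mul_apply]
  refine (area_glCLM_le g _ _).trans (mul_le_mul_of_nonneg_left ?_ (N2_nonneg g))
  simpa only [area_of_mem_orthonormalPairs hx, mul_one] using area_glCLM_le h x.1 x.2

lemma continuous_log_N2 (hd : 2 ≤ d) : Continuous fun g : GLd d => Real.log (N2 g) :=
  continuous_N2.log fun g => (N2_pos hd g).ne'

lemma log_area_glCLM_le_log_N2 (hd : 2 ≤ d) (g : GLd d) {p q : Ed d} (h : 0 < area p q) :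
    Real.log (area (glCLM g p) (glCLM g q)) ≤ Real.log (N2 g) + Real.log (area p q) := by
  rw [← Real.log_mul (N2_pos hd g).ne' h.ne']
  exact Real.log_le_log (area_glCLM_pos g h) (area_glCLM_le g p q)

end SecondExponent

section ProjectiveSpace

lemma isQuotientMap_projectivization_mk :
    IsQuotientMap fun v : {v : Ed d // v ≠ 0} => (Projectivization.mk ℝ v.1 v.2 : Pd d) :=
  ⟨⟨rfl⟩, fun x => ⟨⟨x.rep, x.rep_nonzero⟩, x.mk_rep⟩⟩

/-- The projection of the unit sphere onto `ℙ(ℝ^d)`. -/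
def unitMk (u : Metric.sphere (0 : Ed d) 1) : Pd d :=
  Projectivization.mk ℝ (u : Ed d) (ne_zero_of_mem_unit_sphere u)

lemma isQuotientMap_unitMk : IsQuotientMap (unitMk (d := d)) := by
  have hunit (v : {v : Ed d // v ≠ 0}) : ‖v.1‖⁻¹ • v.1 ∈ Metric.sphere (0 : Ed d) 1 :=
    mem_sphere_zero_iff_norm.2 (norm_smul_inv_norm v.2)
  have hnormalize : Continuous fun v : {v : Ed d // v ≠ 0} =>
      (⟨‖v.1‖⁻¹ • v.1, hunit v⟩ : Metric.sphere (0 : Ed d) 1) :=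
    .subtype_mk (.smul (.inv₀ (by fun_prop) fun v => norm_ne_zero_iff.2 v.2) (by fun_prop)) _
  have hmk : Continuous (unitMk (d := d)) := isQuotientMap_projectivization_mk.continuous.comp
    (.subtype_mk continuous_subtype_val fun u => ne_zero_of_mem_unit_sphere u)
  have hcomp : unitMk ∘ (fun v : {v : Ed d // v ≠ 0} => ⟨‖v.1‖⁻¹ • v.1, hunit v⟩) =
      fun v => (Projectivization.mk ℝ v.1 v.2 : Pd d) :=
    funext fun v => (Projectivization.mk_eq_mk_iff' ℝ _ _ _ _).2 ⟨‖v.1‖⁻¹, rfl⟩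
  exact .of_comp hnormalize hmk (hcomp ▸ isQuotientMap_projectivization_mk)

instance instCompactSpacePd : CompactSpace (Pd d) :=
  isQuotientMap_unitMk.surjective.compactSpace isQuotientMap_unitMk.continuous

lemma pact_mul (g h : GLd d) (x : Pd d) : pact (g * h) x = pact g (pact h x) := by
  obtain ⟨u, rfl⟩ := isQuotientMap_unitMk.surjective x
  simp only [pact, unitMk, Projectivization.map_mk]
  congr 1
  exact glCLM_mul_apply g h u

lemma pact_one (x : Pd d) : pact 1 x = x := by
  obtain ⟨u, rfl⟩ := isQuotientMap_unitMk.surjective x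
  simp only [pact, unitMk, Projectivization.map_mk]
  congr 1
  exact glCLM_one_apply _

lemma pact_injective (g : GLd d) : Function.Injective (pact g) :=
  Projectivization.map_injective _ (glLinear_injective g)

lemma continuous_pact : Continuous fun p : GLd d × Pd d => pact p.1 p.2 := by
  have : LocallyCompactSpace (Matrix (Fin d) (Fin d) ℝ) :=
    inferInstanceAs (LocallyCompactSpace (Fin d → Fin d → ℝ))
  refine isQuotientMap_unitMk.continuous_lift_prod_right ?_
  exact isQuotientMap_projectivization_mk.continuous.comp
    (.subtype_mk (f := fun p : GLd d × Metric.sphere (0 : Ed d) 1 => glCLM p.1 p.2)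
      (by fun_prop) fun p => glCLM_ne_zero p.1 (ne_zero_of_mem_unit_sphere p.2))

lemma continuous_pact_left (x : Pd d) : Continuous fun g : GLd d => pact g x :=
  Continuous.comp (f := fun g : GLd d => (g, x)) (g := fun p : GLd d × Pd d => pact p.1 p.2)
    continuous_pact (by fun_prop)

lemma continuous_pact_right (g : GLd d) : Continuous (pact g) :=
  Continuous.comp (f := fun x : Pd d => (g, x)) (g := fun p : GLd d × Pd d => pact p.1 p.2)
    continuous_pact (by fun_prop)

lemma pdelta_mk {p q : Ed d} (hp : p ≠ 0) (hq : q ≠ 0) :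
    pdelta (Projectivization.mk ℝ p hp) (Projectivization.mk ℝ q hq) =
      area p q / (‖p‖ * ‖q‖) := by
  obtain ⟨a, ha⟩ := Projectivization.exists_smul_eq_mk_rep ℝ p hp
  obtain ⟨b, hb⟩ := Projectivization.exists_smul_eq_mk_rep ℝ q hq
  have hab : |(a : ℝ)| * |(b : ℝ)| ≠ 0 :=
    mul_ne_zero (abs_ne_zero.2 a.ne_zero) (abs_ne_zero.2 b.ne_zero)
  rw [pdelta, ← area, ← ha, ← hb, Units.smul_def, Units.smul_def, area_smul_left,
    area_smul_right, norm_smul, norm_smul, Real.norm_eq_abs, Real.norm_eq_abs, ← mul_assoc,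
    mul_mul_mul_comm, mul_div_mul_left _ _ hab]

variable {u v : Metric.sphere (0 : Ed d) 1}

lemma pdelta_unitMk : pdelta (unitMk u) (unitMk v) = area (u : Ed d) v := by
  rw [unitMk, unitMk, pdelta_mk, norm_eq_of_mem_sphere, norm_eq_of_mem_sphere, mul_one, div_one]

lemma pdelta_pact_unitMk (g : GLd d) : pdelta (pact g (unitMk u)) (pact g (unitMk v)) =
    area (glCLM g u) (glCLM g v) / (‖glCLM g u‖ * ‖glCLM g v‖) :=
  pdelta_mk (glCLM_ne_zero g (ne_zero_of_mem_unit_sphere u))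
    (glCLM_ne_zero g (ne_zero_of_mem_unit_sphere v))

lemma pdelta_nonneg (x y : Pd d) : 0 ≤ pdelta x y :=
  div_nonneg (area_nonneg _ _) (by positivity)

lemma pdelta_le_one (x y : Pd d) : pdelta x y ≤ 1 :=
  div_le_one_of_le₀ (area_le_norm_mul_norm _ _) (by positivity)

lemma pdelta_self (x : Pd d) : pdelta x x = 0 := by
  rw [pdelta, ← area, area_self, zero_div]

lemma area_unit_pos_iff : 0 < area (u : Ed d) v ↔ unitMk u ≠ unitMk v := by
  refine ⟨fun h huv => ?_, fun huv => (area_nonneg _ _).lt_of_ne' fun h => huv ?_⟩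
  · rw [← pdelta_unitMk, huv, pdelta_self] at h
    exact h.false
  · obtain ⟨c, hc⟩ := exists_eq_smul_of_area_eq_zero (ne_zero_of_mem_unit_sphere u) h
    exact ((Projectivization.mk_eq_mk_iff' ℝ _ _ _ _).2 ⟨c, hc.symm⟩).symm

lemma pdelta_pos {x y : Pd d} (h : x ≠ y) : 0 < pdelta x y := by
  obtain ⟨u, rfl⟩ := isQuotientMap_unitMk.surjective x
  obtain ⟨v, rfl⟩ := isQuotientMap_unitMk.surjective y
  rw [pdelta_unitMk]
  exact area_unit_pos_iff.2 h

end ProjectiveSpace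

section Contraction

/-- The logarithm of the factor by which `g` contracts the distance between two distinct points of
`ℙ(ℝ^d)`. -/
def logContraction (y : {p : Pd d × Pd d // p.1 ≠ p.2}) (g : GLd d) : ℝ :=
  Real.log (pdelta (pact g y.1.1) (pact g y.1.2)) - Real.log (pdelta y.1.1 y.1.2)

lemma logContraction_unitMk {u v : Metric.sphere (0 : Ed d) 1} (h : unitMk u ≠ unitMk v)
    (g : GLd d) : logContraction ⟨(unitMk u, unitMk v), h⟩ g =
      Real.log (area (glCLM g u) (glCLM g v)) - Real.log (area (u : Ed d) v) -
        logNorm u g - logNorm v g := by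
  have hu := (norm_glCLM_unit_pos g u).ne'
  have hv := (norm_glCLM_unit_pos g v).ne'
  rw [logContraction, pdelta_pact_unitMk, pdelta_unitMk, logNorm, logNorm,
    Real.log_div (area_glCLM_pos g (area_unit_pos_iff.2 h)).ne' (mul_ne_zero hu hv),
    Real.log_mul hu hv]
  ring

lemma exists_eq_unitMk (y : {p : Pd d × Pd d // p.1 ≠ p.2}) :
    ∃ (u v : Metric.sphere (0 : Ed d) 1) (h : unitMk u ≠ unitMk v),
      y = ⟨(unitMk u, unitMk v), h⟩ := by
  obtain ⟨⟨x, x'⟩, h⟩ := y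
  obtain ⟨u, rfl⟩ := isQuotientMap_unitMk.surjective x
  obtain ⟨v, rfl⟩ := isQuotientMap_unitMk.surjective x'
  exact ⟨u, v, h, rfl⟩

lemma continuous_logContraction (y : {p : Pd d × Pd d // p.1 ≠ p.2}) :
    Continuous (logContraction y) := by
  obtain ⟨u, v, h, rfl⟩ := exists_eq_unitMk y
  have harea : Continuous fun g : GLd d => Real.log (area (glCLM g u) (glCLM g v)) :=
    Continuous.log (by fun_prop) fun g => (area_glCLM_pos g (area_unit_pos_iff.2 h)).ne'
  exact (((harea.sub continuous_const).sub (isCocycle_logNorm.continuous u)).sub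
    (isCocycle_logNorm.continuous v)).congr fun g => (logContraction_unitMk h g).symm

lemma abs_logContraction_le (y : {p : Pd d × Pd d // p.1 ≠ p.2}) (g : GLd d) :
    |logContraction y g| ≤ 4 * (‖glCLM g‖ + ‖glCLM g⁻¹‖) := by
  obtain ⟨u, v, h, rfl⟩ := exists_eq_unitMk y
  have hpos := area_unit_pos_iff.2 h
  have hupper := log_area_glCLM_le g hpos
  have hlower := log_area_glCLM_le g⁻¹ (area_glCLM_pos g hpos)
  rw [glCLM_leftInv, glCLM_leftInv] at hlower
  have hu := abs_le.1 (abs_logNorm_le u g)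
  have hv := abs_le.1 (abs_logNorm_le v g)
  rw [logContraction_unitMk, abs_le]
  constructor <;> linarith [norm_nonneg (glCLM g), norm_nonneg (glCLM g⁻¹)]

lemma isCocycle_logContraction : IsCocycle (logContraction (d := d)) where
  continuous := continuous_logContraction
  one y := by rw [logContraction, pact_one, pact_one, sub_self]
  exists_mul y h := by
    refine ⟨⟨(pact h y.1.1, pact h y.1.2), (pact_injective h).ne y.2⟩, fun g => ?_⟩
    simp only [logContraction, pact_mul]
    ring
  exists_abs_le := ⟨_, by fun_prop, abs_logContraction_le⟩

lemma logContraction_le (hd : 2 ≤ d) {u v : Metric.sphere (0 : Ed d) 1}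
    (h : unitMk u ≠ unitMk v) (g : GLd d) :
    logContraction ⟨(unitMk u, unitMk v), h⟩ g ≤
      Real.log (N2 g) - logNorm u g - logNorm v g := by
  have hN2 := log_area_glCLM_le_log_N2 hd g (area_unit_pos_iff.2 h)
  rw [logContraction_unitMk]
  linarith

lemma exists_le_log_N2 (hd : 2 ≤ d) : ∃ y u v, ∀ g : GLd d,
    logContraction y g + (logNorm u g + logNorm v g) ≤ Real.log (N2 g) := by
  obtain ⟨x, hx⟩ := nonempty_orthonormalPairs hd
  have harea := area_of_mem_orthonormalPairs hx
  let u : Metric.sphere (0 : Ed d) 1 := ⟨x.1, mem_sphere_zero_iff_norm.2 hx.1⟩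
  let v : Metric.sphere (0 : Ed d) 1 := ⟨x.2, mem_sphere_zero_iff_norm.2 hx.2.1⟩
  have h : unitMk u ≠ unitMk v := area_unit_pos_iff.1 (harea.symm ▸ one_pos : 0 < area x.1 x.2)
  exact ⟨⟨(unitMk u, unitMk v), h⟩, u, v, fun g => by linarith [logContraction_le hd h g]⟩

variable {μ : Measure (GLd d)} [IsProbabilityMeasure μ]

theorem tendsto_L12 (hd : 2 ≤ d) (hμ : CompactlySupported μ) :
    Tendsto (fun n : ℕ => (n : ℝ)⁻¹ * ∫ g, Real.log (N2 g) ∂mconvN μ n) atTop (𝓝 (L12 μ)) := by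
  obtain ⟨R, hR⟩ := isCocycle_logNorm.exists_abs_integral_le hμ
  obtain ⟨T, hT⟩ := isCocycle_logContraction.exists_abs_integral_le hμ
  obtain ⟨y, u, v, hle⟩ := exists_le_log_N2 hd
  refine tendsto_integral_mconvN_div hμ (continuous_log_N2 hd) (fun n => .of_forall fun h g => ?_)
    (R := T + 2 * R) fun n => ?_
  · rw [← Real.log_mul (N2_pos hd g).ne' (N2_pos hd h).ne']
    exact Real.log_le_log (N2_pos hd _) (N2_mul_le g h)
  · have hy := (hμ.convPow n).integrable (continuous_logContraction y)
    have hint (u) := (hμ.convPow n).integrable (isCocycle_logNorm.continuous u)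
    have hmono := integral_mono (hy.add ((hint u).add (hint v)))
      ((hμ.convPow n).integrable (continuous_log_N2 hd)) hle
    rw [integral_add' hy ((hint u).add (hint v)), integral_add' (hint u) (hint v)] at hmono
    linarith [(abs_le.1 (hT n y)).1, (abs_le.1 (hR n u)).1, (abs_le.1 (hR n v)).1]

lemma exists_integral_logContraction_le (hd : 2 ≤ d) (hμ : CompactlySupported μ) {β : ℝ}
    (hβ : ∀ ε > 0, ∀ᶠ n : ℕ in atTop, ∀ u, (β - ε) * n ≤ ∫ g, logNorm u g ∂mconvN μ n)
    (hlt : L12 μ < 2 * β) :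
    ∃ (N : ℕ) (b c : ℝ), 0 < N ∧ b < 0 ∧ c < N * b ∧
      ∀ y, ∫ g, logContraction y g ∂mconvN μ N ≤ c := by
  set ε := (2 * β - L12 μ) / 8 with hε
  have hε0 : 0 < ε := by linarith
  obtain ⟨N, ⟨hN, hN2⟩, hgrowth⟩ := (((eventually_gt_atTop 0).and
    ((tendsto_L12 hd hμ).eventually_le_const (lt_add_of_pos_right _ hε0))).and (hβ ε hε0)).exists
  have hN0 : (0 : ℝ) < N := Nat.cast_pos.2 hN
  rw [inv_mul_le_iff₀ hN0] at hN2
  refine ⟨N, -(4 * ε), -(5 * ε * N), hN, by linarith, by nlinarith, fun y => ?_⟩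
  obtain ⟨u, v, h, rfl⟩ := exists_eq_unitMk y
  have hint (u) := (hμ.convPow N).integrable (isCocycle_logNorm.continuous u)
  have hlog := (hμ.convPow N).integrable (continuous_log_N2 hd)
  calc ∫ g, logContraction ⟨(unitMk u, unitMk v), h⟩ g ∂mconvN μ N
      ≤ ∫ g, (Real.log (N2 g) - logNorm u g - logNorm v g) ∂mconvN μ N :=
        integral_mono ((hμ.convPow N).integrable (continuous_logContraction _))
          ((hlog.sub (hint u)).sub (hint v)) (logContraction_le hd h)
    _ = ∫ g, Real.log (N2 g) ∂mconvN μ N - ∫ g, logNorm u g ∂mconvN μ N -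
          ∫ g, logNorm v g ∂mconvN μ N := by
        rw [← integral_sub hlog (hint u)]
        exact integral_sub (hlog.sub (hint u)) (hint v)
    _ ≤ N * (L12 μ + ε) - (β - ε) * N - (β - ε) * N := by
        linarith [hgrowth u, hgrowth v]
    _ = -(5 * ε * N) := by rw [hε]; ring

theorem exists_integral_exp_logContraction_le (hd : 2 ≤ d) (hμ : CompactlySupported μ)
    (hqi : QuasiIrreducible μ) (hgap : L2 μ < L1 μ) :
    ∃ α s C : ℝ, 0 < α ∧ α ≤ 1 ∧ 0 < s ∧ 0 < C ∧ ∀ (n : ℕ) y,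
      ∫ g, Real.exp (α * logContraction y g) ∂mconvN μ n ≤ C * Real.exp (-(s * n)) := by
  obtain ⟨x, hx⟩ := nonempty_orthonormalPairs hd
  have : Nonempty (Metric.sphere (0 : Ed d) 1) := ⟨⟨x.1, mem_sphere_zero_iff_norm.2 hx.1⟩⟩
  obtain ⟨β, hβ, u, hu⟩ := isCocycle_logNorm.exists_calibrated hμ continuous_logNorm_left
  have hL1 := L1_le_of_quasiIrreducible hμ hqi hβ hu
  have hL12 : L12 μ < 2 * β := by rw [L2] at hgap; linarith
  obtain ⟨N, b, c, hN, hb, hcb, hc⟩ := exists_integral_logContraction_le hd hμ hβ hL12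
  obtain ⟨α, C, hα0, hα1, hC, hexp⟩ :=
    isCocycle_logContraction.exists_integral_exp_le hμ hN hc hcb
  refine ⟨α, -(α * b), C, hα0, hα1, neg_pos.2 (mul_neg_of_pos_of_neg hα0 hb), hC, fun n y => ?_⟩
  rw [neg_mul, neg_neg]
  exact hexp n y

end Contraction

section MarkovOperator

variable {α : ℝ} {φ : Pd d → ℝ}

lemma valpha_nonneg : 0 ≤ valpha α φ := by
  refine Real.sSup_nonneg ?_
  rintro _ ⟨x, y, -, rfl⟩
  exact div_nonneg (abs_nonneg _) (Real.rpow_nonneg (pdelta_nonneg _ _) _)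

lemma IsHolder.abs_sub_le (hφ : IsHolder α φ) (x y : Pd d) :
    |φ x - φ y| ≤ valpha α φ * pdelta x y ^ α := by
  rcases eq_or_ne x y with rfl | hxy
  · rw [sub_self, abs_zero]
    exact mul_nonneg valpha_nonneg (Real.rpow_nonneg (pdelta_nonneg _ _) _)
  · exact (div_le_iff₀ (Real.rpow_pos_of_pos (pdelta_pos hxy) _)).1 (le_csSup hφ ⟨x, y, hxy, rfl⟩)

lemma IsHolder.continuous (hφ : IsHolder α φ) (hα : 0 < α) : Continuous φ := by
  rw [isQuotientMap_unitMk.continuous_iff, continuous_iff_continuousAt]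
  intro u
  have hbound : Continuous fun v : Metric.sphere (0 : Ed d) 1 =>
      valpha α φ * area (v : Ed d) u ^ α :=
    continuous_const.mul (.rpow_const (by fun_prop) fun _ => .inr hα.le)
  have hlim := hbound.tendsto u
  rw [area_self, Real.zero_rpow hα.ne', mul_zero] at hlim
  refine tendsto_iff_dist_tendsto_zero.2 (squeeze_zero (fun _ => dist_nonneg) (fun v => ?_) hlim)
  rw [← pdelta_unitMk]
  exact hφ.abs_sub_le _ _

lemma exists_abs_le_of_continuous (hφ : Continuous φ) : ∃ B, ∀ x, |φ x| ≤ B := by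
  obtain ⟨B, hB⟩ := isCompact_univ.exists_bound_of_continuousOn hφ.continuousOn
  exact ⟨B, fun x => hB x (Set.mem_univ x)⟩

lemma pdelta_pact_rpow (y : {p : Pd d × Pd d // p.1 ≠ p.2}) (g : GLd d) :
    pdelta (pact g y.1.1) (pact g y.1.2) ^ α =
      pdelta y.1.1 y.1.2 ^ α * Real.exp (α * logContraction y g) := by
  have hpos := pdelta_pos y.2
  have hpos' := pdelta_pos ((pact_injective g).ne y.2)
  rw [logContraction, Real.rpow_def_of_pos hpos', Real.rpow_def_of_pos hpos, ← Real.exp_add]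
  ring_nf

lemma IsHolder.abs_integral_pact_sub_le (hφ : IsHolder α φ) (hα : 0 < α) {ν : Measure (GLd d)}
    [IsProbabilityMeasure ν] (hν : CompactlySupported ν) (y : {p : Pd d × Pd d // p.1 ≠ p.2}) :
    |∫ g, φ (pact g y.1.1) ∂ν - ∫ g, φ (pact g y.1.2) ∂ν| ≤
      valpha α φ * ∫ g, Real.exp (α * logContraction y g) ∂ν := by
  have hint (x : Pd d) : Integrable (fun g => φ (pact g x)) ν :=
    hν.integrable ((hφ.continuous hα).comp (continuous_pact_left x))
  have hexp := hν.integrable (isCocycle_logContraction.continuous_exp α y)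
  rw [← integral_sub (hint _) (hint _), ← integral_const_mul, ← Real.norm_eq_abs]
  refine norm_integral_le_of_norm_le (hexp.const_mul _) (.of_forall fun g => ?_)
  refine (hφ.abs_sub_le _ _).trans (mul_le_mul_of_nonneg_left ?_ valpha_nonneg)
  rw [pdelta_pact_rpow]
  exact mul_le_of_le_one_left (Real.exp_pos _).le
    (Real.rpow_le_one (pdelta_nonneg _ _) (pdelta_le_one _ _) hα.le)

variable {μ : Measure (GLd d)} [IsProbabilityMeasure μ] {η : Measure (Pd d)}
  [IsProbabilityMeasure η]

lemma continuous_Qop (hφ : Continuous φ) : Continuous (Qop μ φ) := by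
  obtain ⟨B, hB⟩ := exists_abs_le_of_continuous hφ
  refine isQuotientMap_unitMk.continuous_iff.2 (continuous_of_dominated (bound := fun _ => B)
    (fun u => (hφ.comp (continuous_pact_left _)).aestronglyMeasurable)
    (fun u => .of_forall fun g => hB _) (integrable_const _) (.of_forall fun g => ?_))
  exact hφ.comp ((continuous_pact_right g).comp isQuotientMap_unitMk.continuous)

lemma continuous_Qop_iterate (hφ : Continuous φ) (n : ℕ) : Continuous ((Qop μ)^[n] φ) :=
  Function.Iterate.rec _ hφ (fun _ => continuous_Qop) n

lemma Stationary.integral_Qop (hη : Stationary μ η) (hφ : Continuous φ) :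
    ∫ x, Qop μ φ x ∂η = ∫ x, φ x ∂η := by
  obtain ⟨B, hB⟩ := exists_abs_le_of_continuous hφ
  rw [hη φ hφ ⟨B, hB⟩]
  exact (integral_integral_swap (f := fun g x => φ (pact g x)) (.of_bound
    (hφ.comp continuous_pact).aestronglyMeasurable B (.of_forall fun p => hB _))).symm

lemma Stationary.integral_Qop_iterate (hη : Stationary μ η) (hφ : Continuous φ) (n : ℕ) :
    ∫ x, (Qop μ)^[n] φ x ∂η = ∫ x, φ x ∂η := by
  induction n with
  | zero => rfl
  | succ n ih =>
    rw [Function.iterate_succ_apply', hη.integral_Qop (continuous_Qop_iterate hφ n), ih]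

lemma Qop_iterate_apply (hμ : CompactlySupported μ) (hφ : Continuous φ) (n : ℕ) (x : Pd d) :
    (Qop μ)^[n] φ x = ∫ g, φ (pact g x) ∂mconvN μ n := by
  induction n generalizing x with
  | zero => simp [mconvN, pact_one]
  | succ n ih =>
    have hsplit := (hμ.convPow n).integral_mconv hμ (hφ.comp (continuous_pact_left x))
    simp only [Function.comp_apply, pact_mul, ← ih] at hsplit
    rw [Function.iterate_succ_apply', mconvN_succ, hsplit, Qop]

lemma abs_sub_integral_le (hφ : Continuous φ) {x : Pd d} {K : ℝ}
    (h : ∀ y, |φ x - φ y| ≤ K) : |φ x - ∫ y, φ y ∂η| ≤ K := by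
  obtain ⟨B, hB⟩ := exists_abs_le_of_continuous hφ
  have hint : Integrable φ η := .of_bound hφ.aestronglyMeasurable B (.of_forall hB)
  calc |φ x - ∫ y, φ y ∂η| = ‖∫ y, (φ x - φ y) ∂η‖ := by
        rw [integral_sub (integrable_const _) hint, integral_const, probReal_univ, one_smul,
          Real.norm_eq_abs]
    _ ≤ K := (norm_integral_le_of_norm_le_const (.of_forall h)).trans_eq (by simp)

lemma IsHolder.abs_Qop_iterate_sub_le (hφ : IsHolder α φ) (hα : 0 < α)
    (hμ : CompactlySupported μ) {n : ℕ} {K : ℝ} (hK : 0 ≤ K)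
    (hcontract : ∀ y, ∫ g, Real.exp (α * logContraction y g) ∂mconvN μ n ≤ K) (x y : Pd d) :
    |(Qop μ)^[n] φ x - (Qop μ)^[n] φ y| ≤ K * valpha α φ := by
  rcases eq_or_ne x y with rfl | hxy
  · rw [sub_self, abs_zero]
    exact mul_nonneg hK valpha_nonneg
  · rw [Qop_iterate_apply hμ (hφ.continuous hα), Qop_iterate_apply hμ (hφ.continuous hα),
      mul_comm]
    exact (hφ.abs_integral_pact_sub_le hα (hμ.convPow n) ⟨(x, y), hxy⟩).trans
      (mul_le_mul_of_nonneg_left (hcontract _) valpha_nonneg)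

end MarkovOperator

theorem strong_mixing_markov_operator
    (d : ℕ) (hd : 2 ≤ d) (S : Set (GLd d)) (hS : IsCompact S)
    (μ₀ : Measure (GLd d)) [IsProbabilityMeasure μ₀] (hμ₀S : μ₀ Sᶜ = 0)
    (hqi : QuasiIrreducible μ₀) (hgap : L2 μ₀ < L1 μ₀) :
    ∃ α : ℝ, 0 < α ∧ α ≤ 1 ∧ ∃ θ : ℝ, 1 < θ ∧ ∃ C : ℝ, 0 < C ∧
      ∀ (η : Measure (Pd d)) [IsProbabilityMeasure η], Stationary μ₀ η →
        ∀ φ : Pd d → ℝ, IsHolder α φ → ∀ n : ℕ, 1 ≤ n → ∀ v : Pd d,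
          |(Qop μ₀)^[n] φ v - ∫ w, φ w ∂η| ≤ C * θ ^ (-(n : ℝ)) * valpha α φ := by
  have hμ : CompactlySupported μ₀ := ⟨S, hS, hμ₀S⟩
  obtain ⟨α, s, C, hα0, hα1, hs, hC, hcontract⟩ :=
    exists_integral_exp_logContraction_le hd hμ hqi hgap
  refine ⟨α, hα0, hα1, Real.exp s, Real.one_lt_exp_iff.2 hs, C, hC, fun η _ hη φ hφ n _ v => ?_⟩
  have hrate : Real.exp s ^ (-(n : ℝ)) = Real.exp (-(s * n)) := by rw [← Real.exp_mul, mul_neg]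
  rw [hrate, ← hη.integral_Qop_iterate (hφ.continuous hα0) n]
  exact abs_sub_integral_le (continuous_Qop_iterate (hφ.continuous hα0) n)
    (hφ.abs_Qop_iterate_sub_le hα0 hμ (by positivity) (hcontract n) v)

end
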